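/- arXiv:2010.11814 — 11 statements merged into one kernel-verified Lean document; each statement's English description precedes it below -/
import Mathlib

section
/- Let X be a real normed linear space and let f : (0,∞) → ℝ be a nonnegative function. Then for all nonzero vectors x, y ∈ X: f(‖x‖)‖x‖ + f(‖y‖)‖y‖ − (‖x‖ + ‖y‖ − ‖x−y‖)·max{f(‖x‖), f(‖y‖)} ≤ ‖f(‖x‖)x − f(‖y‖)y‖ ≤ f(‖x‖)‖x‖ + f(‖y‖)‖y‖ − (‖x‖ + ‖y‖ − ‖x−y‖)·min{f(‖x‖), f(‖y‖)}. -/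
/-!
Replacing both coefficients of `a • x - b • y` by a common scalar `c` moves the vector by
`(a - c) • x - (b - c) • y`, hence by at most `|a - c| * ‖x‖ + |b - c| * ‖y‖`. The choice
`c = min a b` gives the upper bound and `c = max a b` the lower one, since each makes both
differences of constant sign.
-/

theorem norm_smul_sub_smul_sub_smul_sub_le {𝕜 X : Type*} [SeminormedRing 𝕜]
    [SeminormedAddCommGroup X] [Module 𝕜 X] [IsBoundedSMul 𝕜 X] (a b c : 𝕜) (x y : X) :
    ‖a • x - b • y - c • (x - y)‖ ≤ ‖a - c‖ * ‖x‖ + ‖b - c‖ * ‖y‖ :=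
  calc ‖a • x - b • y - c • (x - y)‖
    _ = ‖(a - c) • x - (b - c) • y‖ := by
      rw [smul_sub, sub_smul, sub_smul, sub_sub_sub_comm]
    _ ≤ ‖(a - c) • x‖ + ‖(b - c) • y‖ := norm_sub_le _ _
    _ ≤ ‖a - c‖ * ‖x‖ + ‖b - c‖ * ‖y‖ := add_le_add (norm_smul_le _ _) (norm_smul_le _ _)

section RealScalars

variable {X : Type*} [SeminormedAddCommGroup X] [NormedSpace ℝ X] {a b c : ℝ}

theorem norm_smul_sub_smul_le (hc : 0 ≤ c) (hca : c ≤ a) (hcb : c ≤ b) (x y : X) :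
    ‖a • x - b • y‖ ≤ c * ‖x - y‖ + (a - c) * ‖x‖ + (b - c) * ‖y‖ := by
  have hdiff := norm_smul_sub_smul_sub_smul_sub_le a b c x y
  rw [Real.norm_of_nonneg (sub_nonneg.2 hca), Real.norm_of_nonneg (sub_nonneg.2 hcb)] at hdiff
  calc ‖a • x - b • y‖
    _ ≤ ‖c • (x - y)‖ + ‖a • x - b • y - c • (x - y)‖ := norm_le_norm_add_norm_sub' _ _
    _ ≤ c * ‖x - y‖ + ((a - c) * ‖x‖ + (b - c) * ‖y‖) := by
      rw [norm_smul_of_nonneg hc]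
      gcongr
    _ = c * ‖x - y‖ + (a - c) * ‖x‖ + (b - c) * ‖y‖ := (add_assoc _ _ _).symm

theorem mul_norm_sub_le_norm_smul_sub_smul_add (hac : a ≤ c) (hbc : b ≤ c) (x y : X) :
    c * ‖x - y‖ ≤ ‖a • x - b • y‖ + (c - a) * ‖x‖ + (c - b) * ‖y‖ := by
  have hdiff := norm_smul_sub_smul_sub_smul_sub_le a b c x y
  rw [norm_sub_rev a, norm_sub_rev b, Real.norm_of_nonneg (sub_nonneg.2 hac),
    Real.norm_of_nonneg (sub_nonneg.2 hbc)] at hdiff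
  calc c * ‖x - y‖
    _ ≤ ‖c‖ * ‖x - y‖ := by gcongr; exact Real.le_norm_self c
    _ = ‖c • (x - y)‖ := (norm_smul _ _).symm
    _ ≤ ‖a • x - b • y‖ + ‖a • x - b • y - c • (x - y)‖ := norm_le_norm_add_norm_sub _ _
    _ ≤ ‖a • x - b • y‖ + ((c - a) * ‖x‖ + (c - b) * ‖y‖) := by gcongr
    _ = ‖a • x - b • y‖ + (c - a) * ‖x‖ + (c - b) * ‖y‖ := (add_assoc _ _ _).symm

theorem refined_triangle_inequality_general (ha : 0 ≤ a) (hb : 0 ≤ b) (x y : X) :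
    a * ‖x‖ + b * ‖y‖ - (‖x‖ + ‖y‖ - ‖x - y‖) * max a b ≤ ‖a • x - b • y‖ ∧
      ‖a • x - b • y‖ ≤ a * ‖x‖ + b * ‖y‖ - (‖x‖ + ‖y‖ - ‖x - y‖) * min a b := by
  constructor
  · linarith [mul_norm_sub_le_norm_smul_sub_smul_add (le_max_left a b) (le_max_right a b) x y]
  · linarith [norm_smul_sub_smul_le (le_min ha hb) (min_le_left a b) (min_le_right a b) x y]

end RealScalars

theorem refined_triangle_inequality
    {X : Type*} [NormedAddCommGroup X] [NormedSpace ℝ X]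
    (f : ℝ → ℝ) (hf : ∀ t : ℝ, 0 < t → 0 ≤ f t)
    (x y : X) (hx : x ≠ 0) (hy : y ≠ 0) :
    f ‖x‖ * ‖x‖ + f ‖y‖ * ‖y‖ - (‖x‖ + ‖y‖ - ‖x - y‖) * max (f ‖x‖) (f ‖y‖)
        ≤ ‖f ‖x‖ • x - f ‖y‖ • y‖ ∧
      ‖f ‖x‖ • x - f ‖y‖ • y‖
        ≤ f ‖x‖ * ‖x‖ + f ‖y‖ * ‖y‖ - (‖x‖ + ‖y‖ - ‖x - y‖) * min (f ‖x‖) (f ‖y‖) :=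
  refined_triangle_inequality_general (hf _ (norm_pos_iff.2 hx)) (hf _ (norm_pos_iff.2 hy)) x y
end

section
/- Let X be a real normed linear space and let p < 1. Then for all nonzero vectors x, y ∈ X: ‖x‖^p + ‖y‖^p − (‖x‖ + ‖y‖ − ‖x−y‖)·(min{‖x‖,‖y‖})^{p−1} ≤ α_p[x,y] ≤ ‖x‖^p + ‖y‖^p − (‖x‖ + ‖y‖ − ‖x−y‖)·(max{‖x‖,‖y‖})^{p−1}. -/
noncomputable def alphaD {X : Type*} [NormedAddCommGroup X] [NormedSpace ℝ X]
    (p : ℝ) (x y : X) : ℝ :=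
  ‖(‖x‖ ^ (p - 1)) • x - (‖y‖ ^ (p - 1)) • y‖

/-! For `b ≤ a`, both bounds on `‖a • x - b • y‖` are the triangle inequality, applied to
`a • (x - y) = (a • x - b • y) - (a - b) • y` for the lower one and to
`a • x - b • y = (a - b) • x + b • (x - y)` for the upper one. Written symmetrically in `(a, x)` and
`(b, y)`, they involve only `max a b` and `min a b`. With `a = ‖x‖ ^ (p - 1)` and
`b = ‖y‖ ^ (p - 1)`, the power being antitone for `p < 1`, these are the powers of `min ‖x‖ ‖y‖` and
`max ‖x‖ ‖y‖`. -/

section WeightedDifference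

variable {E : Type*} [SeminormedAddCommGroup E] [NormedSpace ℝ E]

theorem sub_mul_max_le_norm_smul_sub_smul (a b : ℝ) (x y : E) :
    a * ‖x‖ + b * ‖y‖ - (‖x‖ + ‖y‖ - ‖x - y‖) * max a b ≤ ‖a • x - b • y‖ := by
  wlog hba : b ≤ a generalizing a b x y
  · have hswap := this b a y x (le_of_not_ge hba)
    rwa [add_comm (b * _), add_comm ‖y‖, norm_sub_rev y, max_comm, norm_sub_rev (b • y)] at hswap
  have htri : a * ‖x - y‖ ≤ ‖a • x - b • y‖ + (a - b) * ‖y‖ :=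
    calc a * ‖x - y‖ ≤ ‖a • (x - y)‖ := by
          rw [norm_smul]
          gcongr
          exact Real.le_norm_self a
      _ = ‖(a • x - b • y) - (a - b) • y‖ := by congr 1; module
      _ ≤ ‖a • x - b • y‖ + ‖(a - b) • y‖ := norm_sub_le _ _
      _ = ‖a • x - b • y‖ + (a - b) * ‖y‖ := by rw [norm_smul_of_nonneg (sub_nonneg.2 hba)]
  rw [max_eq_left hba]
  linarith

theorem norm_smul_sub_smul_le_sub_mul_min {a b : ℝ} (ha : 0 ≤ a) (hb : 0 ≤ b) (x y : E) :
    ‖a • x - b • y‖ ≤ a * ‖x‖ + b * ‖y‖ - (‖x‖ + ‖y‖ - ‖x - y‖) * min a b := by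
  wlog hba : b ≤ a generalizing a b x y
  · have hswap := this hb ha y x (le_of_not_ge hba)
    rwa [add_comm (b * _), add_comm ‖y‖, norm_sub_rev y, min_comm, norm_sub_rev (b • y)] at hswap
  have htri : ‖a • x - b • y‖ ≤ (a - b) * ‖x‖ + b * ‖x - y‖ :=
    calc ‖a • x - b • y‖ = ‖(a - b) • x + b • (x - y)‖ := by congr 1; module
      _ ≤ ‖(a - b) • x‖ + ‖b • (x - y)‖ := norm_add_le _ _
      _ = (a - b) * ‖x‖ + b * ‖x - y‖ := by
          rw [norm_smul_of_nonneg (sub_nonneg.2 hba), norm_smul_of_nonneg hb]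
  rw [min_eq_right hba]
  linarith

end WeightedDifference

theorem pAngular_bounds_p_lt_one_general
    {X : Type*} [NormedAddCommGroup X] [NormedSpace ℝ X]
    (p : ℝ) {x y : X} (hx : x ≠ 0) (hy : y ≠ 0) :
    ‖x‖ ^ p + ‖y‖ ^ p - (‖x‖ + ‖y‖ - ‖x - y‖) * max (‖x‖ ^ (p - 1)) (‖y‖ ^ (p - 1))
        ≤ alphaD p x y ∧
      alphaD p x y
        ≤ ‖x‖ ^ p + ‖y‖ ^ p - (‖x‖ + ‖y‖ - ‖x - y‖) * min (‖x‖ ^ (p - 1)) (‖y‖ ^ (p - 1)) := by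
  have rpow_norm {z : X} (hz : z ≠ 0) : ‖z‖ ^ p = ‖z‖ ^ (p - 1) * ‖z‖ := by
    rw [← Real.rpow_add_one (norm_ne_zero_iff.2 hz), sub_add_cancel]
  rw [rpow_norm hx, rpow_norm hy]
  exact ⟨sub_mul_max_le_norm_smul_sub_smul _ _ x y,
    norm_smul_sub_smul_le_sub_mul_min (by positivity) (by positivity) x y⟩

theorem pAngular_bounds_p_lt_one
    {X : Type*} [NormedAddCommGroup X] [NormedSpace ℝ X]
    (p : ℝ) (hp : p < 1) (x y : X) (hx : x ≠ 0) (hy : y ≠ 0) :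
    ‖x‖ ^ p + ‖y‖ ^ p - (‖x‖ + ‖y‖ - ‖x - y‖) * (min ‖x‖ ‖y‖) ^ (p - 1)
        ≤ alphaD p x y ∧
      alphaD p x y
        ≤ ‖x‖ ^ p + ‖y‖ ^ p - (‖x‖ + ‖y‖ - ‖x - y‖) * (max ‖x‖ ‖y‖) ^ (p - 1) := by
  have hanti := Real.antitoneOn_rpow_Ioi_of_exponent_nonpos (sub_nonpos.2 hp.le)
  simpa only [hanti.map_min (norm_pos_iff.2 hx) (norm_pos_iff.2 hy),
    hanti.map_max (norm_pos_iff.2 hx) (norm_pos_iff.2 hy)] using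
    pAngular_bounds_p_lt_one_general p hx hy
end

section
/- Let X be a real normed linear space and let p ≥ 1. Then for all nonzero vectors x, y ∈ X: α_p[x,y] ≥ (p/(2p−1))·(max{‖x‖,‖y‖})^{p−1}·‖x−y‖. -/
section RealPowers

variable {p a b : ℝ}

theorem one_add_mul_self_le_rpow_one_add_of_nonpos {s : ℝ} (hs : -1 < s) (hp : p ≤ 0) :
    1 + p * s ≤ (1 + s) ^ p := by
  have hs' : 0 < 1 + s := by linarith
  have hlog : Real.log (1 + s) ≤ s := by linarith [Real.log_le_sub_one_of_pos hs']
  calc 1 + p * s ≤ 1 + p * Real.log (1 + s) := by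
        gcongr 1 + ?_
        exact mul_le_mul_of_nonpos_left hlog hp
    _ ≤ Real.exp (Real.log (1 + s) * p) := by
        linarith [Real.add_one_le_exp (Real.log (1 + s) * p)]
    _ = (1 + s) ^ p := (Real.rpow_def_of_pos hs' p).symm

theorem rpow_sub_one_mul_self (ha : a ≠ 0) (p : ℝ) : a ^ (p - 1) * a = a ^ p := by
  rw [Real.rpow_sub_one ha, div_mul_cancel₀ _ ha]

theorem rpow_add_mul_rpow_sub_one_mul_sub_le_rpow (hp : p ≤ 0 ∨ 1 ≤ p) (ha : 0 < a) (hb : 0 < b) :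
    a ^ p + p * a ^ (p - 1) * (b - a) ≤ b ^ p := by
  have hs : -1 < b / a - 1 := by linarith [div_pos hb ha]
  have bernoulli : 1 + p * (b / a - 1) ≤ (1 + (b / a - 1)) ^ p :=
    hp.elim (one_add_mul_self_le_rpow_one_add_of_nonpos hs)
      (one_add_mul_self_le_rpow_one_add hs.le)
  calc a ^ p + p * a ^ (p - 1) * (b - a) = (1 + p * (b / a - 1)) * a ^ p := by
        rw [Real.rpow_sub_one ha.ne']
        field_simp
    _ ≤ (1 + (b / a - 1)) ^ p * a ^ p := by gcongr
    _ = b ^ p := by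
        rw [add_sub_cancel, ← Real.mul_rpow (by positivity) ha.le, div_mul_cancel₀ _ ha.ne']

theorem mul_rpow_sub_one_sub_rpow_sub_one_nonneg (hp : p ≤ 0 ∨ 1 ≤ p) (hb : 0 < b) (hab : b ≤ a) :
    0 ≤ p * (a ^ (p - 1) - b ^ (p - 1)) := by
  rcases hp with hp | hp
  · exact mul_nonneg_of_nonpos_of_nonpos hp
      (sub_nonpos.2 <| Real.rpow_le_rpow_of_nonpos hb hab (by linarith))
  · exact mul_nonneg (by linarith)
      (sub_nonneg.2 <| Real.rpow_le_rpow hb.le hab (by linarith))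

theorem abs_mul_abs_rpow_sub_one_sub_mul_le (hp : p ≤ 0 ∨ 1 ≤ p) (hb : 0 < b) (hab : b ≤ a) :
    |p| * |a ^ (p - 1) - b ^ (p - 1)| * b ≤ |p - 1| * |a ^ p - b ^ p| := by
  have ha : 0 < a := hb.trans_le hab
  calc |p| * |a ^ (p - 1) - b ^ (p - 1)| * b = p * (a ^ (p - 1) - b ^ (p - 1)) * b := by
        rw [← abs_mul, abs_of_nonneg (mul_rpow_sub_one_sub_rpow_sub_one_nonneg hp hb hab)]
    _ ≤ (p - 1) * (a ^ p - b ^ p) := by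
        linear_combination rpow_add_mul_rpow_sub_one_mul_sub_le_rpow hp ha hb
          + p * rpow_sub_one_mul_self ha.ne' p - p * rpow_sub_one_mul_self hb.ne' p
    _ ≤ |p - 1| * |a ^ p - b ^ p| := (le_abs_self _).trans_eq (abs_mul _ _)

theorem abs_add_abs_sub_one (hp : p ≤ 0 ∨ 1 ≤ p) : |p| + |p - 1| = |2 * p - 1| := by
  grind

end RealPowers

theorem norm_mul_norm_sub_le_norm_smul_sub_smul_add {𝕜 E : Type*} [SeminormedRing 𝕜]
    [SeminormedAddCommGroup E] [Module 𝕜 E] [NormSMulClass 𝕜 E] (r s : 𝕜) (x y : E) :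
    ‖r‖ * ‖x - y‖ ≤ ‖r • x - s • y‖ + ‖r - s‖ * ‖y‖ := by
  have decomposition : r • (x - y) = (r • x - s • y) - (r - s) • y := by
    rw [smul_sub, sub_smul]
    abel
  rw [← norm_smul, ← norm_smul, decomposition]
  exact norm_sub_le _ _

section AngularDistance

variable {X : Type*} [NormedAddCommGroup X] [NormedSpace ℝ X] {p : ℝ} {x y : X}

theorem alphaD_comm (p : ℝ) (x y : X) : alphaD p x y = alphaD p y x :=
  norm_sub_rev _ _

theorem norm_norm_rpow_sub_one_smul (hx : x ≠ 0) (p : ℝ) : ‖‖x‖ ^ (p - 1) • x‖ = ‖x‖ ^ p := by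
  rw [norm_smul_of_nonneg (by positivity), rpow_sub_one_mul_self (norm_ne_zero_iff.2 hx)]

theorem abs_norm_rpow_sub_norm_rpow_le_alphaD (hx : x ≠ 0) (hy : y ≠ 0) (p : ℝ) :
    |‖x‖ ^ p - ‖y‖ ^ p| ≤ alphaD p x y := by
  rw [← norm_norm_rpow_sub_one_smul hx, ← norm_norm_rpow_sub_one_smul hy]
  exact abs_norm_sub_norm_le _ _

theorem norm_rpow_mul_norm_sub_le_alphaD_add (p : ℝ) (x y : X) :
    ‖x‖ ^ (p - 1) * ‖x - y‖ ≤ alphaD p x y + |‖x‖ ^ (p - 1) - ‖y‖ ^ (p - 1)| * ‖y‖ := by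
  have h := norm_mul_norm_sub_le_norm_smul_sub_smul_add (‖x‖ ^ (p - 1)) (‖y‖ ^ (p - 1)) x y
  rwa [Real.norm_of_nonneg (by positivity), Real.norm_eq_abs] at h

theorem abs_mul_norm_rpow_mul_norm_sub_le (hp : p ≤ 0 ∨ 1 ≤ p) (hy : y ≠ 0) (hyx : ‖y‖ ≤ ‖x‖) :
    |p| * (‖x‖ ^ (p - 1) * ‖x - y‖) ≤ |2 * p - 1| * alphaD p x y := by
  have hy' : 0 < ‖y‖ := norm_pos_iff.2 hy
  have hx : x ≠ 0 := norm_pos_iff.1 (hy'.trans_le hyx)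
  calc |p| * (‖x‖ ^ (p - 1) * ‖x - y‖)
      ≤ |p| * (alphaD p x y + |‖x‖ ^ (p - 1) - ‖y‖ ^ (p - 1)| * ‖y‖) := by
        gcongr
        exact norm_rpow_mul_norm_sub_le_alphaD_add p x y
    _ = |p| * alphaD p x y + |p| * |‖x‖ ^ (p - 1) - ‖y‖ ^ (p - 1)| * ‖y‖ := by ring
    _ ≤ |p| * alphaD p x y + |p - 1| * |‖x‖ ^ p - ‖y‖ ^ p| := by
        gcongr _ + ?_
        exact abs_mul_abs_rpow_sub_one_sub_mul_le hp hy' hyx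
    _ ≤ |p| * alphaD p x y + |p - 1| * alphaD p x y := by
        gcongr
        exact abs_norm_rpow_sub_norm_rpow_le_alphaD hx hy p
    _ = |2 * p - 1| * alphaD p x y := by rw [← add_mul, abs_add_abs_sub_one hp]

theorem pAngular_lower_bound_p_ge_one_general (hp : p ≤ 0 ∨ 1 ≤ p) (hx : x ≠ 0) (hy : y ≠ 0) :
    p / (2 * p - 1) * max ‖x‖ ‖y‖ ^ (p - 1) * ‖x - y‖ ≤ alphaD p x y := by
  wlog hyx : ‖y‖ ≤ ‖x‖ generalizing x y
  · rw [max_comm, norm_sub_rev, alphaD_comm]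
    exact this hy hx (le_of_not_ge hyx)
  have hq : 0 < |2 * p - 1| := abs_pos.2 (by grind)
  rw [max_eq_left hyx, mul_assoc]
  calc p / (2 * p - 1) * (‖x‖ ^ (p - 1) * ‖x - y‖)
      ≤ |p / (2 * p - 1)| * (‖x‖ ^ (p - 1) * ‖x - y‖) := by
        gcongr
        exact le_abs_self _
    _ = |p| * (‖x‖ ^ (p - 1) * ‖x - y‖) / |2 * p - 1| := by rw [abs_div, div_mul_eq_mul_div]
    _ ≤ alphaD p x y :=
        (div_le_iff₀' hq).2 (abs_mul_norm_rpow_mul_norm_sub_le hp hy hyx)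

end AngularDistance

theorem pAngular_lower_bound_p_ge_one
    {X : Type*} [NormedAddCommGroup X] [NormedSpace ℝ X]
    (p : ℝ) (hp : 1 ≤ p) (x y : X) (hx : x ≠ 0) (hy : y ≠ 0) :
    alphaD p x y ≥ (p / (2 * p - 1)) * (max ‖x‖ ‖y‖) ^ (p - 1) * ‖x - y‖ :=
  pAngular_lower_bound_p_ge_one_general (Or.inr hp) hx hy
end

section
/- Let X be a real normed linear space and let 0 ≤ p < 1. Then for all nonzero vectors x, y ∈ X: α_p[x,y] ≥ p·(max{‖x‖,‖y‖})^{p−1}·‖x−y‖. -/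
/-!
Let `‖x‖ ≤ ‖y‖`, `a = ‖x‖ ^ (p - 1)` and `b = ‖y‖ ^ (p - 1)`, so that `b ≤ a` when `p ≤ 1`. The
triangle inequality bounds `‖a • x - b • y‖` below both by `b * ‖x - y‖ - (a - b) * ‖x‖` and by
`b * ‖y‖ - a * ‖x‖`. For `0 ≤ p ≤ 1`, average these bounds with weights `p` and `1 - p`: the terms
other than `p * b * ‖x - y‖` have nonnegative sum, because the graph of the concave function
`r ↦ r ^ p` lies below its tangent line at `‖y‖`.
-/

theorem rpow_le_rpow_add_mul_sub {p r s : ℝ} (hp0 : 0 ≤ p) (hp1 : p ≤ 1) (hr : 0 ≤ r)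
    (hs : 0 < s) : r ^ p ≤ s ^ p + p * s ^ (p - 1) * (r - s) := by
  have weighted_am_gm : s ^ (1 - p) * r ^ p ≤ (1 - p) * s + p * r :=
    Real.geom_mean_le_arith_mean2_weighted (sub_nonneg.mpr hp1) hp0 hs.le hr (sub_add_cancel 1 p)
  have cancel : s ^ (p - 1) * s ^ (1 - p) = 1 := by
    rw [← Real.rpow_add hs, sub_add_sub_cancel, sub_self, Real.rpow_zero]
  calc
    r ^ p = s ^ (p - 1) * (s ^ (1 - p) * r ^ p) := by rw [← mul_assoc, cancel, one_mul]
    _ ≤ s ^ (p - 1) * ((1 - p) * s + p * r) := by gcongr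
    _ = s ^ (p - 1) * s + p * s ^ (p - 1) * (r - s) := by ring
    _ = s ^ p + p * s ^ (p - 1) * (r - s) := by rw [← Real.rpow_add_one hs.ne', sub_add_cancel]

section SeminormedSpace

variable {X : Type*} [SeminormedAddCommGroup X] [NormedSpace ℝ X] {a b p : ℝ} {x y : X}

theorem mul_norm_sub_sub_le_norm_smul_sub_smul (hb : 0 ≤ b) (hab : b ≤ a) :
    b * ‖x - y‖ - (a - b) * ‖x‖ ≤ ‖a • x - b • y‖ := by
  rw [sub_le_iff_le_add]
  calc
    b * ‖x - y‖ = ‖b • (x - y)‖ := (norm_smul_of_nonneg hb _).symm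
    _ = ‖(a • x - b • y) - (a - b) • x‖ := by congr 1; module
    _ ≤ ‖a • x - b • y‖ + ‖(a - b) • x‖ := norm_sub_le _ _
    _ = ‖a • x - b • y‖ + (a - b) * ‖x‖ := by rw [norm_smul_of_nonneg (sub_nonneg.mpr hab)]

theorem mul_norm_sub_mul_norm_le_norm_smul_sub_smul (ha : 0 ≤ a) (hb : 0 ≤ b) :
    b * ‖y‖ - a * ‖x‖ ≤ ‖a • x - b • y‖ := by
  rw [norm_sub_rev, ← norm_smul_of_nonneg ha, ← norm_smul_of_nonneg hb]
  exact norm_sub_norm_le _ _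

theorem mul_rpow_mul_norm_sub_le_of_norm_le (hp0 : 0 ≤ p) (hp1 : p ≤ 1) (hx : 0 < ‖x‖)
    (hxy : ‖x‖ ≤ ‖y‖) :
    p * ‖y‖ ^ (p - 1) * ‖x - y‖ ≤ ‖‖x‖ ^ (p - 1) • x - ‖y‖ ^ (p - 1) • y‖ := by
  have hy : 0 < ‖y‖ := hx.trans_le hxy
  have tangent := rpow_le_rpow_add_mul_sub hp0 hp1 hx.le hy
  have rpow_x : ‖x‖ ^ p = ‖x‖ ^ (p - 1) * ‖x‖ := by
    rw [← Real.rpow_add_one hx.ne', sub_add_cancel]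
  have rpow_y : ‖y‖ ^ p = ‖y‖ ^ (p - 1) * ‖y‖ := by
    rw [← Real.rpow_add_one hy.ne', sub_add_cancel]
  rw [rpow_x, rpow_y] at tangent
  have rpow_anti : ‖y‖ ^ (p - 1) ≤ ‖x‖ ^ (p - 1) :=
    Real.rpow_le_rpow_of_nonpos hx hxy (sub_nonpos.mpr hp1)
  have ha : 0 ≤ ‖x‖ ^ (p - 1) := by positivity
  have hb : 0 ≤ ‖y‖ ^ (p - 1) := by positivity
  generalize ‖x‖ ^ (p - 1) = a at *
  generalize ‖y‖ ^ (p - 1) = b at *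
  calc
    p * b * ‖x - y‖ ≤
        p * (b * ‖x - y‖ - (a - b) * ‖x‖) + (1 - p) * (b * ‖y‖ - a * ‖x‖) := by linarith
    _ ≤ p * ‖a • x - b • y‖ + (1 - p) * ‖a • x - b • y‖ := by
      have := sub_nonneg.mpr hp1
      gcongr
      · exact mul_norm_sub_sub_le_norm_smul_sub_smul hb rpow_anti
      · exact mul_norm_sub_mul_norm_le_norm_smul_sub_smul ha hb
    _ = ‖a • x - b • y‖ := by ring

theorem pAngular_lower_bound_p_in_unit_general (hp : p ≤ 1) (hx : ‖x‖ ≠ 0) (hy : ‖y‖ ≠ 0) :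
    p * max ‖x‖ ‖y‖ ^ (p - 1) * ‖x - y‖ ≤ ‖‖x‖ ^ (p - 1) • x - ‖y‖ ^ (p - 1) • y‖ := by
  wlog hxy : ‖x‖ ≤ ‖y‖ generalizing x y
  · rw [max_comm, norm_sub_rev x, norm_sub_rev (_ • x)]
    exact this hy hx (le_of_not_ge hxy)
  rw [max_eq_right hxy]
  rcases le_total 0 p with hp0 | hp0
  · exact mul_rpow_mul_norm_sub_le_of_norm_le hp0 hp ((norm_nonneg x).lt_of_ne' hx) hxy
  · calc
      p * ‖y‖ ^ (p - 1) * ‖x - y‖ ≤ 0 := by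
        rw [mul_assoc]
        exact mul_nonpos_of_nonpos_of_nonneg hp0 (by positivity)
      _ ≤ _ := norm_nonneg _

end SeminormedSpace

theorem pAngular_lower_bound_p_in_unit
    {X : Type*} [NormedAddCommGroup X] [NormedSpace ℝ X]
    (p : ℝ) (hp0 : 0 ≤ p) (hp1 : p < 1) (x y : X) (hx : x ≠ 0) (hy : y ≠ 0) :
    alphaD p x y ≥ p * (max ‖x‖ ‖y‖) ^ (p - 1) * ‖x - y‖ :=
  pAngular_lower_bound_p_in_unit_general hp1.le (norm_ne_zero_iff.mpr hx) (norm_ne_zero_iff.mpr hy)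
end

section
/- Let X be a real normed linear space and let x, y ∈ X be nonzero. If 1 ≤ p ≤ 2, then ‖x‖^p + ‖y‖^p − (‖x‖+‖y‖−‖x−y‖)·(max{‖x‖,‖y‖})^{p−1} ≥ 0. If 0 ≤ p < 1, then ‖x‖^p + ‖y‖^p − (‖x‖+‖y‖−‖x−y‖)·(min{‖x‖,‖y‖})^{p−1} ≥ 0. -/
/-!
By the reverse triangle inequality `‖x‖ + ‖y‖ - ‖x - y‖ ≤ 2 * min ‖x‖ ‖y‖`, so only the norms
`a = ‖x‖` and `b = ‖y‖` matter. For the minimum, use that `t ↦ t ^ p` is monotone for `0 ≤ p`.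
For the maximum `M = max a b`, the map `t ↦ t ^ (p - 2)` is antitone for `p ≤ 2`, whence
`a ^ p + b ^ p ≥ M ^ (p - 2) * (a ^ 2 + b ^ 2) ≥ M ^ (p - 2) * (2 * a * b)`,
and `a * b = min a b * M`.
-/

section RealPower

variable {a b p : ℝ}

theorem rpow_sub_two_mul_sq_le_rpow (ha : 0 < a) (hab : a ≤ b) (hp : p ≤ 2) :
    b ^ (p - 2) * a ^ 2 ≤ a ^ p :=
  calc
    b ^ (p - 2) * a ^ 2 ≤ a ^ (p - 2) * a ^ 2 := by
      gcongr ?_ * _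
      exact Real.rpow_le_rpow_of_nonpos ha hab (sub_nonpos.2 hp)
    _ = a ^ p := by
      rw [← Real.rpow_add_natCast ha.ne']
      norm_num

theorem two_mul_min_mul_max_rpow_sub_one_le (ha : 0 < a) (hb : 0 < b) (hp : p ≤ 2) :
    2 * min a b * max a b ^ (p - 1) ≤ a ^ p + b ^ p := by
  have hmax : 0 < max a b := lt_max_of_lt_left ha
  calc
    2 * min a b * max a b ^ (p - 1) = max a b ^ (p - 2) * (2 * (min a b * max a b)) := by
      rw [show p - 1 = p - 2 + 1 by ring, Real.rpow_add_one hmax.ne']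
      ring
    _ = max a b ^ (p - 2) * (2 * a * b) := by rw [min_mul_max, mul_assoc 2]
    _ ≤ max a b ^ (p - 2) * (a ^ 2 + b ^ 2) := by
      gcongr
      exact two_mul_le_add_sq a b
    _ ≤ a ^ p + b ^ p := by
      rw [mul_add]
      exact add_le_add (rpow_sub_two_mul_sq_le_rpow ha (le_max_left a b) hp)
        (rpow_sub_two_mul_sq_le_rpow hb (le_max_right a b) hp)

theorem two_mul_min_mul_min_rpow_sub_one_le (ha : 0 < a) (hb : 0 < b) (hp : 0 ≤ p) :
    2 * min a b * min a b ^ (p - 1) ≤ a ^ p + b ^ p := by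
  have hmin : 0 < min a b := lt_min ha hb
  calc
    2 * min a b * min a b ^ (p - 1) = min a b ^ p + min a b ^ p := by
      rw [Real.rpow_sub_one hmin.ne', mul_assoc, mul_div_cancel₀ _ hmin.ne', two_mul]
    _ ≤ a ^ p + b ^ p := by
      gcongr
      · exact min_le_left a b
      · exact min_le_right a b

end RealPower

theorem norm_add_norm_sub_norm_sub_le_two_mul_min {E : Type*} [SeminormedAddCommGroup E] (x y : E) :
    ‖x‖ + ‖y‖ - ‖x - y‖ ≤ 2 * min ‖x‖ ‖y‖ := by
  have ⟨hyx, hxy⟩ := abs_le.1 (abs_norm_sub_norm_le x y)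
  rw [mul_min_of_nonneg _ _ zero_le_two]
  exact le_min (by linarith) (by linarith)

theorem lower_bounds_nonneg_general {E : Type*} [SeminormedAddCommGroup E] {x y : E}
    (hx : 0 < ‖x‖) (hy : 0 < ‖y‖) (p : ℝ) :
    (p ≤ 2 →
      0 ≤ ‖x‖ ^ p + ‖y‖ ^ p - (‖x‖ + ‖y‖ - ‖x - y‖) * max ‖x‖ ‖y‖ ^ (p - 1)) ∧
    (0 ≤ p →
      0 ≤ ‖x‖ ^ p + ‖y‖ ^ p - (‖x‖ + ‖y‖ - ‖x - y‖) * min ‖x‖ ‖y‖ ^ (p - 1)) := by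
  have hle := norm_add_norm_sub_norm_sub_le_two_mul_min x y
  refine ⟨fun hp ↦ sub_nonneg.2 ?_, fun hp ↦ sub_nonneg.2 ?_⟩
  · exact (mul_le_mul_of_nonneg_right hle (by positivity)).trans
      (two_mul_min_mul_max_rpow_sub_one_le hx hy hp)
  · exact (mul_le_mul_of_nonneg_right hle (by positivity)).trans
      (two_mul_min_mul_min_rpow_sub_one_le hx hy hp)

theorem lower_bounds_nonneg
    {X : Type*} [NormedAddCommGroup X] [NormedSpace ℝ X]
    (x y : X) (hx : x ≠ 0) (hy : y ≠ 0) (p : ℝ) :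
    (1 ≤ p → p ≤ 2 →
      0 ≤ ‖x‖ ^ p + ‖y‖ ^ p - (‖x‖ + ‖y‖ - ‖x - y‖) * (max ‖x‖ ‖y‖) ^ (p - 1)) ∧
    (0 ≤ p → p < 1 →
      0 ≤ ‖x‖ ^ p + ‖y‖ ^ p - (‖x‖ + ‖y‖ - ‖x - y‖) * (min ‖x‖ ‖y‖) ^ (p - 1)) :=
  (lower_bounds_nonneg_general (norm_pos_iff.2 hx) (norm_pos_iff.2 hy) p).imp
    (fun h _ ↦ h) (fun h hp _ ↦ h hp)
end

section
/- Let X be a real normed linear space and let x, y ∈ X be nonzero. Write m = min{‖x‖,‖y‖}, M = max{‖x‖,‖y‖}. Then: (i) if p ≥ 1, then ‖x‖^p + ‖y‖^p − (‖x‖+‖y‖−‖x−y‖)·m^{p−1} ≤ p·M^{p−1}·‖x−y‖; (ii) if 0 ≤ p < 1, then ‖x‖^p + ‖y‖^p − (‖x‖+‖y‖−‖x−y‖)·M^{p−1} ≤ (2−p)·M^{p−1}·‖x−y‖; (iii) if p < 0, then ‖x‖^p + ‖y‖^p − (‖x‖+‖y‖−‖x−y‖)·M^{p−1} ≤ (2−p)·(m^p/M)·‖x−y‖;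 (iv) if 0 ≤ p < 1, then p·M^{p−1}·‖x−y‖ ≤ ‖x‖^p + ‖y‖^p − (‖x‖+‖y‖−‖x−y‖)·m^{p−1}. -/
/-!
Let `a ≤ b` be the two norms and `d ≥ b - a` the norm of the difference. Each bound is affine in
`d`, so it amounts to a comparison of slopes together with the extreme case `d = b - a`. The latter
follows from the position of the graph of `t ↦ t ^ p` (of `t ↦ t ^ (1 - p)` when `p ≤ 0`) relative
to its tangent at `b`.
-/

section RealPowers

variable {a b d p : ℝ}

theorem one_add_mul_div_sub_one_mul_rpow (hb : b ≠ 0) :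
    (1 + p * (a / b - 1)) * b ^ p = b ^ p - p * b ^ (p - 1) * (b - a) := by
  rw [Real.rpow_sub_one hb]
  field_simp
  ring

theorem rpow_sub_rpow_le_of_one_le (ha : 0 ≤ a) (hb : 0 < b) (hp : 1 ≤ p) :
    b ^ p - a ^ p ≤ p * b ^ (p - 1) * (b - a) := by
  have bernoulli : 1 + p * (a / b - 1) ≤ (a / b) ^ p := by
    simpa only [add_sub_cancel] using
      one_add_mul_self_le_rpow_one_add (s := a / b - 1) (by linarith [div_nonneg ha hb.le]) hp
  rw [Real.div_rpow ha hb.le, le_div_iff₀ (by positivity)] at bernoulli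
  linarith [one_add_mul_div_sub_one_mul_rpow (a := a) (p := p) hb.ne']

theorem le_rpow_sub_rpow_of_le_one (ha : 0 ≤ a) (hb : 0 < b) (hp₀ : 0 ≤ p) (hp₁ : p ≤ 1) :
    p * b ^ (p - 1) * (b - a) ≤ b ^ p - a ^ p := by
  have bernoulli : (a / b) ^ p ≤ 1 + p * (a / b - 1) := by
    simpa only [add_sub_cancel] using
      rpow_one_add_le_one_add_mul_self (s := a / b - 1) (by linarith [div_nonneg ha hb.le]) hp₀ hp₁
  rw [Real.div_rpow ha hb.le, div_le_iff₀ (by positivity)] at bernoulli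
  linarith [one_add_mul_div_sub_one_mul_rpow (a := a) (p := p) hb.ne']

theorem rpow_sub_mul_rpow_sub_one_le_of_nonpos (ha : 0 < a) (hb : 0 < b) (hp : p ≤ 0) :
    a ^ p - a * b ^ (p - 1) ≤ (1 - p) * (a ^ p / b) * (b - a) := by
  have tangent : b ^ (1 - p) - a ^ (1 - p) ≤ (1 - p) * b ^ (1 - p - 1) * (b - a) :=
    rpow_sub_rpow_le_of_one_le ha.le hb (by linarith)
  rw [show 1 - p - 1 = -p by ring, Real.rpow_sub ha, Real.rpow_sub hb, Real.rpow_one,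
    Real.rpow_one, Real.rpow_neg hb.le] at tangent
  calc a ^ p - a * b ^ (p - 1)
      = a ^ p * b ^ p / b * (b / b ^ p - a / a ^ p) := by
        rw [Real.rpow_sub_one hb.ne']
        field_simp
    _ ≤ a ^ p * b ^ p / b * ((1 - p) * (b ^ p)⁻¹ * (b - a)) := by gcongr
    _ = (1 - p) * (a ^ p / b) * (b - a) := by field_simp

theorem rpow_add_rpow_sub_mul_rpow_sub_one (ha : a ≠ 0) :
    a ^ p + b ^ p - (a + b - d) * a ^ (p - 1) =
      b ^ p - a ^ p + a ^ (p - 1) * (d - (b - a)) := by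
  rw [Real.rpow_sub_one ha]
  field_simp
  ring

theorem rpow_add_rpow_sub_mul_rpow_left_le_of_one_le (ha : 0 < a) (hab : a ≤ b)
    (hd : b - a ≤ d) (hp : 1 ≤ p) :
    a ^ p + b ^ p - (a + b - d) * a ^ (p - 1) ≤ p * b ^ (p - 1) * d := by
  have hb : 0 < b := ha.trans_le hab
  have slope_le : a ^ (p - 1) ≤ p * b ^ (p - 1) :=
    (Real.rpow_le_rpow ha.le hab (sub_nonneg.2 hp)).trans
      (le_mul_of_one_le_left (by positivity) hp)
  calc a ^ p + b ^ p - (a + b - d) * a ^ (p - 1)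
      = b ^ p - a ^ p + a ^ (p - 1) * (d - (b - a)) := rpow_add_rpow_sub_mul_rpow_sub_one ha.ne'
    _ ≤ p * b ^ (p - 1) * (b - a) + p * b ^ (p - 1) * (d - (b - a)) :=
        add_le_add (rpow_sub_rpow_le_of_one_le ha.le hb hp)
          (mul_le_mul_of_nonneg_right slope_le (sub_nonneg.2 hd))
    _ = p * b ^ (p - 1) * d := by ring

theorem le_rpow_add_rpow_sub_mul_rpow_left_of_le_one (ha : 0 < a) (hab : a ≤ b) (hd : b - a ≤ d)
    (hp₀ : 0 ≤ p) (hp₁ : p ≤ 1) :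
    p * b ^ (p - 1) * d ≤ a ^ p + b ^ p - (a + b - d) * a ^ (p - 1) := by
  have hb : 0 < b := ha.trans_le hab
  have slope_le : p * b ^ (p - 1) ≤ a ^ (p - 1) :=
    (mul_le_of_le_one_left (by positivity) hp₁).trans
      (Real.rpow_le_rpow_of_nonpos ha hab (sub_nonpos.2 hp₁))
  calc p * b ^ (p - 1) * d
      = p * b ^ (p - 1) * (b - a) + p * b ^ (p - 1) * (d - (b - a)) := by ring
    _ ≤ b ^ p - a ^ p + a ^ (p - 1) * (d - (b - a)) :=
        add_le_add (le_rpow_sub_rpow_of_le_one ha.le hb hp₀ hp₁)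
          (mul_le_mul_of_nonneg_right slope_le (sub_nonneg.2 hd))
    _ = a ^ p + b ^ p - (a + b - d) * a ^ (p - 1) :=
        (rpow_add_rpow_sub_mul_rpow_sub_one ha.ne').symm

theorem rpow_add_rpow_sub_mul_rpow_right_le_of_le_one (ha : 0 ≤ a) (hb : 0 < b) (hd : b - a ≤ d)
    (hp₀ : 0 ≤ p) (hp₁ : p ≤ 1) :
    a ^ p + b ^ p - (a + b - d) * b ^ (p - 1) ≤ (2 - p) * b ^ (p - 1) * d := by
  have slope_nonneg : 0 ≤ (1 - p) * b ^ (p - 1) := mul_nonneg (sub_nonneg.2 hp₁) (by positivity)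
  calc a ^ p + b ^ p - (a + b - d) * b ^ (p - 1)
      = a ^ p - b ^ p + b ^ (p - 1) * (d - (a - b)) := by
        rw [add_comm (a ^ p), add_comm a, rpow_add_rpow_sub_mul_rpow_sub_one hb.ne']
    _ ≤ -(p * b ^ (p - 1) * (b - a)) + b ^ (p - 1) * (d - (a - b)) := by
        linarith [le_rpow_sub_rpow_of_le_one ha hb hp₀ hp₁]
    _ = b ^ (p - 1) * d + (1 - p) * b ^ (p - 1) * (b - a) := by ring
    _ ≤ b ^ (p - 1) * d + (1 - p) * b ^ (p - 1) * d := by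
        linarith [mul_le_mul_of_nonneg_left hd slope_nonneg]
    _ = (2 - p) * b ^ (p - 1) * d := by ring

theorem rpow_add_rpow_sub_mul_rpow_right_le_of_nonpos (ha : 0 < a) (hab : a ≤ b)
    (hd : b - a ≤ d) (hp : p ≤ 0) :
    a ^ p + b ^ p - (a + b - d) * b ^ (p - 1) ≤ (2 - p) * (a ^ p / b) * d := by
  have hb : 0 < b := ha.trans_le hab
  have hd₀ : 0 ≤ d := (sub_nonneg.2 hab).trans hd
  have slope_nonneg : 0 ≤ (1 - p) * (a ^ p / b) := mul_nonneg (by linarith) (by positivity)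
  have rpow_sub_one_le : b ^ (p - 1) ≤ a ^ p / b := by
    rw [Real.rpow_sub_one hb.ne']
    exact div_le_div_of_nonneg_right (Real.rpow_le_rpow_of_nonpos ha hab hp) hb.le
  calc a ^ p + b ^ p - (a + b - d) * b ^ (p - 1)
      = b ^ (p - 1) * d + (a ^ p - a * b ^ (p - 1)) := by
        rw [Real.rpow_sub_one hb.ne']
        field_simp
        ring
    _ ≤ a ^ p / b * d + (1 - p) * (a ^ p / b) * (b - a) :=
        add_le_add (mul_le_mul_of_nonneg_right rpow_sub_one_le hd₀)
          (rpow_sub_mul_rpow_sub_one_le_of_nonpos ha hb hp)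
    _ ≤ a ^ p / b * d + (1 - p) * (a ^ p / b) * d := by
        linarith [mul_le_mul_of_nonneg_left hd slope_nonneg]
    _ = (2 - p) * (a ^ p / b) * d := by ring

end RealPowers

theorem refined_bounds_vs_maligranda_general {E : Type*} [SeminormedAddCommGroup E]
    (x y : E) (hx : 0 < ‖x‖) (hy : 0 < ‖y‖) (p : ℝ) :
    (1 ≤ p →
      ‖x‖ ^ p + ‖y‖ ^ p - (‖x‖ + ‖y‖ - ‖x - y‖) * min ‖x‖ ‖y‖ ^ (p - 1)
        ≤ p * max ‖x‖ ‖y‖ ^ (p - 1) * ‖x - y‖) ∧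
    (0 ≤ p → p ≤ 1 →
      ‖x‖ ^ p + ‖y‖ ^ p - (‖x‖ + ‖y‖ - ‖x - y‖) * max ‖x‖ ‖y‖ ^ (p - 1)
        ≤ (2 - p) * max ‖x‖ ‖y‖ ^ (p - 1) * ‖x - y‖) ∧
    (p ≤ 0 →
      ‖x‖ ^ p + ‖y‖ ^ p - (‖x‖ + ‖y‖ - ‖x - y‖) * max ‖x‖ ‖y‖ ^ (p - 1)
        ≤ (2 - p) * (min ‖x‖ ‖y‖ ^ p / max ‖x‖ ‖y‖) * ‖x - y‖) ∧
    (0 ≤ p → p ≤ 1 →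
      p * max ‖x‖ ‖y‖ ^ (p - 1) * ‖x - y‖
        ≤ ‖x‖ ^ p + ‖y‖ ^ p - (‖x‖ + ‖y‖ - ‖x - y‖) * min ‖x‖ ‖y‖ ^ (p - 1)) := by
  wlog hxy : ‖x‖ ≤ ‖y‖ generalizing x y
  · rw [add_comm (‖x‖ ^ p), add_comm ‖x‖, norm_sub_rev x, min_comm, max_comm]
    exact this y x hy hx (le_of_not_ge hxy)
  have hd : ‖y‖ - ‖x‖ ≤ ‖x - y‖ := norm_sub_rev y x ▸ norm_sub_norm_le y x
  rw [min_eq_left hxy, max_eq_right hxy]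
  exact ⟨rpow_add_rpow_sub_mul_rpow_left_le_of_one_le hx hxy hd,
    rpow_add_rpow_sub_mul_rpow_right_le_of_le_one hx.le hy hd,
    rpow_add_rpow_sub_mul_rpow_right_le_of_nonpos hx hxy hd,
    le_rpow_add_rpow_sub_mul_rpow_left_of_le_one hx hxy hd⟩

theorem refined_bounds_vs_maligranda
    {X : Type*} [NormedAddCommGroup X] [NormedSpace ℝ X]
    (x y : X) (hx : x ≠ 0) (hy : y ≠ 0) (p : ℝ)
    (m M : ℝ) (hm : m = min ‖x‖ ‖y‖) (hM : M = max ‖x‖ ‖y‖) :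
    (1 ≤ p →
      ‖x‖ ^ p + ‖y‖ ^ p - (‖x‖ + ‖y‖ - ‖x - y‖) * m ^ (p - 1)
        ≤ p * M ^ (p - 1) * ‖x - y‖) ∧
    (0 ≤ p → p < 1 →
      ‖x‖ ^ p + ‖y‖ ^ p - (‖x‖ + ‖y‖ - ‖x - y‖) * M ^ (p - 1)
        ≤ (2 - p) * M ^ (p - 1) * ‖x - y‖) ∧
    (p < 0 →
      ‖x‖ ^ p + ‖y‖ ^ p - (‖x‖ + ‖y‖ - ‖x - y‖) * M ^ (p - 1)
        ≤ (2 - p) * (m ^ p / M) * ‖x - y‖) ∧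
    (0 ≤ p → p < 1 →
      p * M ^ (p - 1) * ‖x - y‖
        ≤ ‖x‖ ^ p + ‖y‖ ^ p - (‖x‖ + ‖y‖ - ‖x - y‖) * m ^ (p - 1)) := by
  obtain ⟨h₁, h₂, h₃, h₄⟩ :=
    refined_bounds_vs_maligranda_general x y (norm_pos_iff.2 hx) (norm_pos_iff.2 hy) p
  subst hm hM
  exact ⟨h₁, fun h₀ hlt => h₂ h₀ hlt.le, fun hlt => h₃ hlt.le, fun h₀ hlt => h₄ h₀ hlt.le⟩
end

section
/- Let X be a real inner product space. Then for every p ∈ ℝ and all nonzero vectors x, y ∈ X: α_p[x,y]² = (‖x‖^p − ‖y‖^p)² + ‖x‖^p·‖y‖^p·α[x,y]², where moreover α[x,y]² = (‖x−y‖² − (‖x‖−‖y‖)²)/(‖x‖·‖y‖). -/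
noncomputable def angularD {X : Type*} [NormedAddCommGroup X] [NormedSpace ℝ X]
    (x y : X) : ℝ :=
  ‖‖x‖⁻¹ • x - ‖y‖⁻¹ • y‖

section SeminormedSpace

variable {E : Type*} [SeminormedAddCommGroup E] [InnerProductSpace ℝ E]

theorem norm_smul_sub_smul_sq_real (a b : ℝ) (u v : E) :
    ‖a • u - b • v‖ ^ 2
      = (a - b) * (a * ‖u‖ ^ 2 - b * ‖v‖ ^ 2) + a * b * ‖u - v‖ ^ 2 := by
  simp only [norm_sub_sq_real, norm_smul, mul_pow, Real.norm_eq_abs, sq_abs,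
    real_inner_smul_left, real_inner_smul_right]
  ring

theorem norm_smul_sub_smul_sq_of_norm_eq_one (a b : ℝ) {u v : E} (hu : ‖u‖ = 1) (hv : ‖v‖ = 1) :
    ‖a • u - b • v‖ ^ 2 = (a - b) ^ 2 + a * b * ‖u - v‖ ^ 2 := by
  rw [norm_smul_sub_smul_sq_real, hu, hv]
  ring

end SeminormedSpace

section NormedSpace

variable {V : Type*} [NormedAddCommGroup V] [NormedSpace ℝ V]

theorem norm_rpow_sub_one_smul (p : ℝ) (x : V) :
    ‖x‖ ^ (p - 1) • x = ‖x‖ ^ p • NormedSpace.normalize x := by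
  rcases eq_or_ne x 0 with rfl | hx
  · simp
  · rw [Real.rpow_sub_one (norm_ne_zero_iff.mpr hx), NormedSpace.normalize, smul_smul,
      div_eq_mul_inv]

theorem alphaD_eq_norm_smul_normalize_sub (p : ℝ) (x y : V) :
    alphaD p x y
      = ‖‖x‖ ^ p • NormedSpace.normalize x - ‖y‖ ^ p • NormedSpace.normalize y‖ := by
  rw [alphaD, norm_rpow_sub_one_smul, norm_rpow_sub_one_smul]

theorem alphaD_one (x y : V) : alphaD 1 x y = ‖x - y‖ := by
  simp [alphaD]

end NormedSpace

section InnerProductSpace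

variable {X : Type*} [NormedAddCommGroup X] [InnerProductSpace ℝ X]

theorem alphaD_sq (p : ℝ) {x y : X} (hx : x ≠ 0) (hy : y ≠ 0) :
    alphaD p x y ^ 2
      = (‖x‖ ^ p - ‖y‖ ^ p) ^ 2 + ‖x‖ ^ p * ‖y‖ ^ p * angularD x y ^ 2 := by
  rw [alphaD_eq_norm_smul_normalize_sub]
  exact norm_smul_sub_smul_sq_of_norm_eq_one _ _
    (NormedSpace.norm_normalize hx) (NormedSpace.norm_normalize hy)

theorem norm_sub_sq_eq_add_mul_angularD_sq {x y : X} (hx : x ≠ 0) (hy : y ≠ 0) :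
    ‖x - y‖ ^ 2 = (‖x‖ - ‖y‖) ^ 2 + ‖x‖ * ‖y‖ * angularD x y ^ 2 := by
  simpa only [alphaD_one, Real.rpow_one] using alphaD_sq 1 hx hy

theorem angularD_sq {x y : X} (hx : x ≠ 0) (hy : y ≠ 0) :
    angularD x y ^ 2 = (‖x - y‖ ^ 2 - (‖x‖ - ‖y‖) ^ 2) / (‖x‖ * ‖y‖) := by
  have norm_mul_norm_ne_zero : ‖x‖ * ‖y‖ ≠ 0 :=
    mul_ne_zero (norm_ne_zero_iff.mpr hx) (norm_ne_zero_iff.mpr hy)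
  rw [eq_div_iff norm_mul_norm_ne_zero, norm_sub_sq_eq_add_mul_angularD_sq hx hy]
  ring

end InnerProductSpace

theorem pAngular_identity_inner
    {X : Type*} [NormedAddCommGroup X] [InnerProductSpace ℝ X]
    (p : ℝ) (x y : X) (hx : x ≠ 0) (hy : y ≠ 0) :
    (alphaD p x y) ^ 2
        = (‖x‖ ^ p - ‖y‖ ^ p) ^ 2 + ‖x‖ ^ p * ‖y‖ ^ p * (angularD x y) ^ 2 ∧
      (angularD x y) ^ 2
        = (‖x - y‖ ^ 2 - (‖x‖ - ‖y‖) ^ 2) / (‖x‖ * ‖y‖) :=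
  ⟨alphaD_sq p hx hy, angularD_sq hx hy⟩
end

section
/- Let X be a real normed linear space and let p, q ∈ ℝ with |p| ≥ |q| and p ≠ q. If for all nonzero vectors x, y ∈ X the inequality α_p[x,y] ≥ ((‖x‖^p + ‖y‖^p)/(‖x‖^q + ‖y‖^q))·α_q[x,y] holds, then X is an inner product space, i.e., the norm of X satisfies the parallelogram law ‖x+y‖² + ‖x−y‖² = 2‖x‖² + 2‖y‖² for all x, y ∈ X. -/
/-!
Let `‖a + b‖ = ‖a - b‖`. For `x = exp θ • (a + b)` and `y = exp (-θ) • (b - a)`, the quotient of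
`α_p[x, y]` by `‖x‖ ^ p + ‖y‖ ^ p` is proportional to `f (tanh (p * θ))`, where `f t = ‖a + t • b‖`.
The hypothesis thus says `f (tanh (q * θ)) ≤ f (tanh (p * θ))`. Letting the argument shrink to `0`
if `|q| < |p|`, and averaging over `± θ` if `q = -p`, one sees that the convex function `f` is
minimal at `0`: isosceles orthogonality implies Birkhoff orthogonality.

In such a space the two notions coincide, so they are symmetric and homogeneous, and exchanging two
vectors of equal norm is an isometry of their span. Hence "`c / ‖x‖ ^ 2` is the coefficient of the
projection of `y` onto `x`" is symmetric in `x` and `y`. Projecting `x` and `y` onto `x + y`, for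
orthogonal `x` and `y`, gives the Pythagorean theorem, and with it the parallelogram law.
-/

section ConvexMinimum

open Set Filter Topology

theorem apply_zero_le_of_forall_apply_mul_le {g : ℝ → ℝ} {k : ℝ} (hg : ContinuousAt g 0)
    (hk : |k| < 1) (h : ∀ t, g (k * t) ≤ g t) (t : ℝ) : g 0 ≤ g t := by
  have le_iterate (n : ℕ) : g (k ^ n * t) ≤ g t := by
    induction n with
    | zero => simp
    | succ n ih =>
      rw [pow_succ', mul_assoc]
      exact (h _).trans ih
  have tendsto_zero : Tendsto (fun n : ℕ ↦ k ^ n * t) atTop (𝓝 0) := by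
    simpa using (tendsto_pow_atTop_nhds_zero_of_abs_lt_one hk).mul_const t
  exact le_of_tendsto (hg.tendsto.comp tendsto_zero) (.of_forall le_iterate)

theorem two_mul_apply_zero_le_of_convexOn {f : ℝ → ℝ} (hf : ConvexOn ℝ univ f) (t : ℝ) :
    2 * f 0 ≤ f (-t) + f t := by
  have half_pos : (0 : ℝ) ≤ 1 / 2 := by norm_num
  have midpoint := hf.2 (mem_univ (-t)) (mem_univ t) half_pos half_pos (add_halves 1)
  simp only [smul_eq_mul, mul_neg, neg_add_cancel] at midpoint
  linarith

theorem apply_zero_le_of_forall_apply_tanh_le {f : ℝ → ℝ} (hf : ConvexOn ℝ univ f) {p q : ℝ}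
    (hpq : |q| ≤ |p|) (hne : p ≠ q)
    (h : ∀ θ, f (Real.tanh (q * θ)) ≤ f (Real.tanh (p * θ))) (t : ℝ) : f 0 ≤ f t := by
  have hp : p ≠ 0 := by
    rintro rfl
    rw [abs_zero, abs_nonpos_iff] at hpq
    exact hne hpq.symm
  have h_scale (s : ℝ) : f (Real.tanh (q / p * s)) ≤ f (Real.tanh s) := by
    simpa only [mul_div_cancel₀ s hp, mul_div_assoc', div_mul_eq_mul_div] using h (s / p)
  have h_tanh (s : ℝ) : f 0 ≤ f (Real.tanh s) := by
    rcases hpq.lt_or_eq with hlt | heq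
    · have hcont : Continuous fun s ↦ f (Real.tanh s) := by
        have : Continuous Real.tanh := by
          simp only [funext Real.tanh_eq_sinh_div_cosh]
          exact Real.continuous_sinh.div Real.continuous_cosh fun x ↦ (Real.cosh_pos x).ne'
        exact (continuousOn_univ.mp (hf.continuousOn isOpen_univ)).comp this
      have hk : |q / p| < 1 := by rwa [abs_div, div_lt_one (abs_pos.mpr hp)]
      simpa using apply_zero_le_of_forall_apply_mul_le hcont.continuousAt hk h_scale s
    · have hq : q = -p := (abs_eq_abs.mp heq).resolve_left hne.symm
      have h_neg := h_scale s
      rw [hq, neg_div, div_self hp, neg_one_mul, Real.tanh_neg] at h_neg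
      linarith [two_mul_apply_zero_le_of_convexOn hf (Real.tanh s)]
  have h_local : IsLocalMin f 0 := by
    filter_upwards [Ioo_mem_nhds neg_one_lt_zero one_pos] with τ hτ
    simpa only [Real.tanh_artanh hτ] using h_tanh (Real.artanh τ)
  exact IsMinOn.of_isLocalMin_of_convex_univ h_local hf t

end ConvexMinimum

section Orthogonality

variable {X : Type*} [NormedAddCommGroup X] {x y : X}

/-- Isosceles orthogonality (in the sense of James): the parallelogram spanned by `x` and `y` has
diagonals of equal length. The relation is not homogeneous in general. -/
def IsoscelesOrtho (x y : X) : Prop := ‖x + y‖ = ‖x - y‖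

theorem IsoscelesOrtho.symm (h : IsoscelesOrtho x y) : IsoscelesOrtho y x := by
  rwa [IsoscelesOrtho, add_comm, norm_sub_rev]

variable [NormedSpace ℝ X]

theorem isoscelesOrtho_add_sub (h : ‖x‖ = ‖y‖) : IsoscelesOrtho (x + y) (x - y) := by
  rw [IsoscelesOrtho, show x + y + (x - y) = (2 : ℝ) • x by module,
    show x + y - (x - y) = (2 : ℝ) • y by module, norm_smul, norm_smul, h]

/-- Birkhoff orthogonality `x ⟂ y` in a normed space: `x` is a point of minimal norm on the line
through `x` in direction `y`. The relation is not symmetric in general. -/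
def BirkhoffOrtho (x y : X) : Prop := ∀ t : ℝ, ‖x‖ ≤ ‖x + t • y‖

namespace BirkhoffOrtho

theorem smul_left (h : BirkhoffOrtho x y) (c : ℝ) : BirkhoffOrtho (c • x) y := by
  intro t
  rcases eq_or_ne c 0 with rfl | hc
  · simp
  calc ‖c • x‖ = ‖c‖ * ‖x‖ := norm_smul c x
    _ ≤ ‖c‖ * ‖x + (t / c) • y‖ := by gcongr; exact h _
    _ = ‖c • x + t • y‖ := by rw [← norm_smul, smul_add, smul_smul, mul_div_cancel₀ _ hc]

theorem smul_right (h : BirkhoffOrtho x y) (c : ℝ) : BirkhoffOrtho x (c • y) := fun t ↦ by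
  simpa only [smul_smul] using h (t * c)

theorem norm_le_norm_add (h : BirkhoffOrtho x y) : ‖x‖ ≤ ‖x + y‖ := by
  simpa only [one_smul] using h 1

end BirkhoffOrtho

theorem IsoscelesOrtho.birkhoffOrtho_of_add_eq_zero (h : IsoscelesOrtho x y) (h0 : x + y = 0) :
    BirkhoffOrtho x y := by
  have h_sub : x - y = 0 := by rw [← norm_eq_zero, ← h, h0, norm_zero]
  have two_smul_eq_zero : (2 : ℝ) • x = 0 := by
    rw [show (2 : ℝ) • x = x + y + (x - y) by module, h0, h_sub, add_zero]
  have hx : x = 0 := (smul_eq_zero.mp two_smul_eq_zero).resolve_left two_ne_zero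
  intro t
  simp [hx]

theorem exists_birkhoffOrtho_add_smul (x y : X) : ∃ t : ℝ, BirkhoffOrtho (y + t • x) x := by
  rcases eq_or_ne x 0 with rfl | hx
  · exact ⟨0, fun t ↦ by simp⟩
  have lower_bound (t : ℝ) : ‖t‖ * ‖x‖ - ‖y‖ ≤ ‖y + t • x‖ := by
    rw [← norm_smul, add_comm]
    exact norm_sub_le_norm_add _ _
  have coercive : Filter.Tendsto (fun t : ℝ ↦ ‖y + t • x‖) (Filter.cocompact ℝ) Filter.atTop :=
    Filter.tendsto_atTop_mono lower_bound <| Filter.tendsto_atTop_add_const_right _ _ <|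
      (tendsto_norm_cocompact_atTop (E := ℝ)).atTop_mul_const (norm_pos_iff.mpr hx)
  have continuous_line : Continuous fun t : ℝ ↦ ‖y + t • x‖ := by fun_prop
  obtain ⟨t, ht⟩ := continuous_line.exists_forall_le coercive
  exact ⟨t, fun s ↦ by simpa only [add_assoc, ← add_smul] using ht (t + s)⟩

section IsoscelesImpliesBirkhoff

variable (hX : ∀ x y : X, IsoscelesOrtho x y → BirkhoffOrtho x y)
include hX

theorem abs_add_mul_norm_add_le_of_norm_eq (h : ‖x‖ = ‖y‖) (a b : ℝ) :
    |a + b| * ‖x + y‖ ≤ 2 * ‖a • x + b • y‖ := by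
  calc |a + b| * ‖x + y‖ = ‖(a + b) • (x + y)‖ := by rw [norm_smul, Real.norm_eq_abs]
    _ ≤ ‖(a + b) • (x + y) + (a - b) • (x - y)‖ := (hX _ _ (isoscelesOrtho_add_sub h)).smul_left _ _
    _ = ‖(2 : ℝ) • (a • x + b • y)‖ := by congr 1; module
    _ = 2 * ‖a • x + b • y‖ := by rw [norm_smul, Real.norm_ofNat]

-- Rescale the diagonals `x ± y`, of lengths `R` and `r`, to equal norm. The previous bound on the
-- norm of their sum, together with `h`, yields `(R + r) ^ 2 ≤ 4 * r * R`, which forces `R = r`.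
theorem BirkhoffOrtho.isoscelesOrtho (h : BirkhoffOrtho x y) : IsoscelesOrtho x y := by
  rcases eq_or_ne x 0 with rfl | hx
  · simp [IsoscelesOrtho]
  have hx_pos : 0 < ‖x‖ := norm_pos_iff.mpr hx
  set R := ‖x + y‖ with hR
  set r := ‖x - y‖ with hr
  have hR0 : 0 ≤ R := norm_nonneg _
  have hr0 : 0 ≤ r := norm_nonneg _
  have equal_norms : ‖r • (x + y)‖ = ‖R • (x - y)‖ := by
    rw [norm_smul, norm_smul, ← hR, ← hr, Real.norm_of_nonneg hR0, Real.norm_of_nonneg hr0,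
      mul_comm]
  have lower : (R + r) * ‖x‖ ≤ ‖r • (x + y) + R • (x - y)‖ := by
    have := h.smul_left (R + r) (r - R)
    rwa [norm_smul, Real.norm_of_nonneg (by positivity),
      show (R + r) • x + (r - R) • y = r • (x + y) + R • (x - y) by module] at this
  have upper : (R + r) * ‖r • (x + y) + R • (x - y)‖ ≤ 4 * r * R * ‖x‖ := by
    have := abs_add_mul_norm_add_le_of_norm_eq hX equal_norms R r
    rw [abs_of_nonneg (by positivity),
      show R • r • (x + y) + r • R • (x - y) = (2 * r * R) • x by module, norm_smul,
      Real.norm_of_nonneg (by positivity)] at this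
    linarith
  have sq_le : (R + r) ^ 2 ≤ 4 * r * R := by
    refine le_of_mul_le_mul_right ?_ hx_pos
    linarith [mul_le_mul_of_nonneg_left lower (add_nonneg hR0 hr0)]
  have sq_sub_eq_zero : (R - r) ^ 2 = 0 := le_antisymm (by linarith) (sq_nonneg _)
  exact sub_eq_zero.mp (pow_eq_zero_iff two_ne_zero |>.mp sq_sub_eq_zero)

theorem BirkhoffOrtho.symm (h : BirkhoffOrtho x y) : BirkhoffOrtho y x :=
  hX _ _ (h.isoscelesOrtho hX).symm

-- Reflecting the line through `x` in direction `y` at its point `x + y` of minimal norm shows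
-- `‖x + 2 • y‖ = ‖x‖`, so the hypotheses persist when `y` is doubled.
theorem BirkhoffOrtho.two_pow_mul_norm_le (h : BirkhoffOrtho x y) (hle : ‖x + y‖ ≤ ‖x‖) (n : ℕ) :
    2 ^ n * ‖y‖ ≤ 2 * ‖x‖ := by
  induction n generalizing y with
  | zero =>
    have := norm_sub_le (x + y) x
    rw [add_sub_cancel_left] at this
    linarith
  | succ n ih =>
    have minimal : BirkhoffOrtho (x + y) y := fun t ↦ by
      rw [show x + y + t • y = x + (1 + t) • y by module]
      exact hle.trans (h _)
    have reflection : ‖x + (2 : ℝ) • y‖ = ‖x‖ := by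
      have : ‖x + y + y‖ = ‖x + y - y‖ := minimal.isoscelesOrtho hX
      rwa [add_assoc, ← two_smul ℝ y, add_sub_cancel_right] at this
    have := ih (h.smul_right 2) reflection.le
    rwa [norm_smul, Real.norm_ofNat, ← mul_assoc, ← pow_succ] at this

theorem BirkhoffOrtho.eq_zero_of_add (h : BirkhoffOrtho x y) (h_add : BirkhoffOrtho (x + y) y) :
    y = 0 := by
  by_contra hy
  have hle : ‖x + y‖ ≤ ‖x‖ := by
    simpa only [neg_one_smul, add_neg_cancel_right] using h_add (-1)
  obtain ⟨n, hn⟩ := pow_unbounded_of_one_lt (2 * ‖x‖ / ‖y‖) one_lt_two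
  rw [div_lt_iff₀ (norm_pos_iff.mpr hy)] at hn
  exact hn.not_ge (h.two_pow_mul_norm_le hX hle n)

theorem norm_smul_add_smul_comm_of_norm_eq (h : ‖x‖ = ‖y‖) (a b : ℝ) :
    ‖a • x + b • y‖ = ‖b • x + a • y‖ := by
  have : ‖((a + b) / 2) • (x + y) + ((a - b) / 2) • (x - y)‖ =
      ‖((a + b) / 2) • (x + y) - ((a - b) / 2) • (x - y)‖ :=
    (((hX _ _ (isoscelesOrtho_add_sub h)).smul_left _).smul_right _).isoscelesOrtho hX
  convert this using 2 <;> module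

theorem norm_mul_norm_sq_smul_add_smul_comm (x y : X) (s : ℝ) :
    ‖y‖ * ‖‖x‖ ^ 2 • y + s • x‖ = ‖x‖ * ‖‖y‖ ^ 2 • x + s • y‖ := by
  have equal_norms : ‖‖x‖ • y‖ = ‖‖y‖ • x‖ := by
    rw [norm_smul, norm_smul, norm_norm, norm_norm, mul_comm]
  calc ‖y‖ * ‖‖x‖ ^ 2 • y + s • x‖ = ‖‖y‖ • (‖x‖ ^ 2 • y + s • x)‖ := by
        rw [norm_smul, norm_norm]
    _ = ‖(‖x‖ * ‖y‖) • ‖x‖ • y + s • ‖y‖ • x‖ := by congr 1; module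
    _ = ‖s • ‖x‖ • y + (‖x‖ * ‖y‖) • ‖y‖ • x‖ :=
        norm_smul_add_smul_comm_of_norm_eq hX equal_norms _ _
    _ = ‖‖x‖ • (‖y‖ ^ 2 • x + s • y)‖ := by congr 1; module
    _ = ‖x‖ * ‖‖y‖ ^ 2 • x + s • y‖ := by rw [norm_smul, norm_norm]

-- In an inner product space both orthogonality relations say that `c` is the inner product.
theorem BirkhoffOrtho.norm_sq_smul_sub_smul_comm {c : ℝ} (hx : x ≠ 0)
    (h : BirkhoffOrtho (‖x‖ ^ 2 • y - c • x) x) : BirkhoffOrtho (‖y‖ ^ 2 • x - c • y) y := by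
  intro t
  refine le_of_mul_le_mul_left ?_ (norm_pos_iff.mpr hx)
  have := mul_le_mul_of_nonneg_left (h t) (norm_nonneg y)
  rw [sub_eq_add_neg, ← neg_smul] at this ⊢
  rw [add_assoc, ← add_smul] at this ⊢
  rwa [norm_mul_norm_sq_smul_add_smul_comm hX x y, norm_mul_norm_sq_smul_add_smul_comm hX x y]
    at this

theorem BirkhoffOrtho.sq_norm_add (h : BirkhoffOrtho x y) :
    ‖x + y‖ ^ 2 = ‖x‖ ^ 2 + ‖y‖ ^ 2 := by
  rcases eq_or_ne x 0 with rfl | hx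
  · simp
  rcases eq_or_ne y 0 with rfl | hy
  · simp
  set w := x + y with hw
  have hw0 : w ≠ 0 := norm_pos_iff.mp ((norm_pos_iff.mpr hx).trans_le h.norm_le_norm_add)
  have ortho_x : BirkhoffOrtho (‖w‖ ^ 2 • x - ‖x‖ ^ 2 • w) w := by
    refine BirkhoffOrtho.norm_sq_smul_sub_smul_comm hX hx ?_
    rw [← smul_sub, hw, add_sub_cancel_left]
    exact (h.symm hX).smul_left _
  have ortho_y : BirkhoffOrtho (‖w‖ ^ 2 • y - ‖y‖ ^ 2 • w) w := by
    refine BirkhoffOrtho.norm_sq_smul_sub_smul_comm hX hy ?_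
    rw [← smul_sub, hw, add_sub_cancel_right]
    exact h.smul_left _
  set d := ‖w‖ ^ 2 - (‖x‖ ^ 2 + ‖y‖ ^ 2) with hd
  have ortho_sub : BirkhoffOrtho (‖w‖ ^ 2 • x - ‖x‖ ^ 2 • w + (-d) • w) w := by
    have : ‖w‖ ^ 2 • x - ‖x‖ ^ 2 • w + (-d) • w = (-1 : ℝ) • (‖w‖ ^ 2 • y - ‖y‖ ^ 2 • w) :=
      calc ‖w‖ ^ 2 • x - ‖x‖ ^ 2 • w + (-d) • w
          = ‖w‖ ^ 2 • (x - w) + ‖y‖ ^ 2 • w := by rw [hd]; module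
        _ = ‖w‖ ^ 2 • (-y) + ‖y‖ ^ 2 • w := by rw [hw, sub_add_cancel_left]
        _ = (-1 : ℝ) • (‖w‖ ^ 2 • y - ‖y‖ ^ 2 • w) := by module
    rw [this]
    exact ortho_y.smul_left _
  have : (-d) • w = 0 := (ortho_x.smul_right _).eq_zero_of_add hX (ortho_sub.smul_right _)
  exact sub_eq_zero.mp (neg_eq_zero.mp ((smul_eq_zero.mp this).resolve_right hw0))

theorem parallelogram_law_of_isoscelesOrtho_imp_birkhoffOrtho (x y : X) :
    ‖x + y‖ ^ 2 + ‖x - y‖ ^ 2 = 2 * ‖x‖ ^ 2 + 2 * ‖y‖ ^ 2 := by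
  obtain ⟨t, ht⟩ := exists_birkhoffOrtho_add_smul x y
  set z := y + t • x with hz
  have pythagoras (s : ℝ) : ‖z + s • x‖ ^ 2 = ‖z‖ ^ 2 + s ^ 2 * ‖x‖ ^ 2 := by
    rw [(ht.smul_right s).sq_norm_add hX, norm_smul, mul_pow, Real.norm_eq_abs, sq_abs]
  have h_add : x + y = z + (1 - t) • x := by rw [hz]; module
  have h_sub : y - x = z + (-1 - t) • x := by rw [hz]; module
  have h_y : y = z + (-t) • x := by rw [hz]; module
  rw [norm_sub_rev, h_sub, h_add, pythagoras, pythagoras, congrArg norm h_y, pythagoras]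
  ring

end IsoscelesImpliesBirkhoff

end Orthogonality

section AngularDistance

variable {X : Type*} [NormedAddCommGroup X] [NormedSpace ℝ X] {a b x y : X}

theorem convexOn_norm_add_smul (x y : X) : ConvexOn ℝ Set.univ fun t : ℝ ↦ ‖x + t • y‖ := by
  simpa [Function.comp_def, AffineMap.lineMap_apply, add_comm] using
    convexOn_univ_norm.comp_affineMap (AffineMap.lineMap x (x + y) : ℝ →ᵃ[ℝ] X)

theorem norm_exp_smul_rpow (p θ : ℝ) (x : X) :
    ‖Real.exp θ • x‖ ^ p = ‖x‖ ^ p * Real.exp (p * θ) := by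
  rw [norm_smul, Real.norm_of_nonneg (Real.exp_pos θ).le,
    Real.mul_rpow (Real.exp_pos θ).le (norm_nonneg x), ← Real.exp_mul, mul_comm, mul_comm θ]

theorem alphaD_exp_smul_exp_neg_smul (h : ‖x‖ = ‖y‖) (p θ : ℝ) :
    alphaD p (Real.exp θ • x) (Real.exp (-θ) • y) =
      ‖x‖ ^ (p - 1) * ‖Real.exp (p * θ) • x - Real.exp (-(p * θ)) • y‖ := by
  have exp_mul_exp (s : ℝ) : Real.exp ((p - 1) * s) * Real.exp s = Real.exp (p * s) := by
    rw [← Real.exp_add]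
    ring_nf
  rw [alphaD, norm_exp_smul_rpow, norm_exp_smul_rpow, ← h, smul_smul, smul_smul, mul_assoc,
    mul_assoc, exp_mul_exp, exp_mul_exp, mul_smul, mul_smul, ← smul_sub, norm_smul,
    Real.norm_of_nonneg (Real.rpow_nonneg (norm_nonneg x) _), mul_neg]

theorem exp_smul_sub_exp_neg_smul (s : ℝ) (a b : X) :
    Real.exp s • (a + b) - Real.exp (-s) • (b - a) =
      (2 * Real.cosh s) • (a + Real.tanh s • b) := by
  have hsinh : Real.cosh s * Real.tanh s = Real.sinh s := by
    rw [Real.tanh_eq_sinh_div_cosh, mul_div_cancel₀ _ (Real.cosh_pos s).ne']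
  rw [smul_add (2 * Real.cosh s), smul_smul, mul_assoc, hsinh, Real.cosh_eq, Real.sinh_eq]
  module

theorem IsoscelesOrtho.alphaD_div_eq (hab : IsoscelesOrtho a b) (h0 : a + b ≠ 0) (p θ : ℝ) :
    alphaD p (Real.exp θ • (a + b)) (Real.exp (-θ) • (b - a)) /
        (‖Real.exp θ • (a + b)‖ ^ p + ‖Real.exp (-θ) • (b - a)‖ ^ p) =
      ‖a + Real.tanh (p * θ) • b‖ / ‖a + b‖ := by
  have hnorm : ‖a + b‖ = ‖b - a‖ := hab.trans (norm_sub_rev a b)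
  have hpos : 0 < ‖a + b‖ := norm_pos_iff.mpr h0
  have denominator : ‖Real.exp θ • (a + b)‖ ^ p + ‖Real.exp (-θ) • (b - a)‖ ^ p =
      ‖a + b‖ ^ p * (2 * Real.cosh (p * θ)) := by
    rw [norm_exp_smul_rpow, norm_exp_smul_rpow, ← hnorm, mul_neg, Real.cosh_eq]
    ring
  rw [denominator, alphaD_exp_smul_exp_neg_smul hnorm, exp_smul_sub_exp_neg_smul, norm_smul,
    Real.norm_of_nonneg (by positivity), Real.rpow_sub_one hpos.ne']
  field_simp

end AngularDistance

theorem pAngular_ratio_characterizes_inner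
    {X : Type*} [NormedAddCommGroup X] [NormedSpace ℝ X]
    (p q : ℝ) (hpq : |q| ≤ |p|) (hne : p ≠ q)
    (h : ∀ x y : X, x ≠ 0 → y ≠ 0 →
      alphaD p x y
        ≥ ((‖x‖ ^ p + ‖y‖ ^ p) / (‖x‖ ^ q + ‖y‖ ^ q)) * alphaD q x y) :
    ∀ x y : X, ‖x + y‖ ^ 2 + ‖x - y‖ ^ 2 = 2 * ‖x‖ ^ 2 + 2 * ‖y‖ ^ 2 := by
  refine parallelogram_law_of_isoscelesOrtho_imp_birkhoffOrtho fun a b hab ↦ ?_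
  rcases eq_or_ne (a + b) 0 with h0 | h0
  · exact hab.birkhoffOrtho_of_add_eq_zero h0
  have hsub : b - a ≠ 0 := by
    rwa [← norm_ne_zero_iff, norm_sub_rev, ← hab, norm_ne_zero_iff]
  have tanh_le (θ : ℝ) : ‖a + Real.tanh (q * θ) • b‖ ≤ ‖a + Real.tanh (p * θ) • b‖ := by
    have hx : Real.exp θ • (a + b) ≠ 0 := smul_ne_zero (Real.exp_ne_zero _) h0
    have hy : Real.exp (-θ) • (b - a) ≠ 0 := smul_ne_zero (Real.exp_ne_zero _) hsub
    refine (div_le_div_iff_of_pos_right (norm_pos_iff.mpr h0)).mp ?_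
    rw [← hab.alphaD_div_eq h0, ← hab.alphaD_div_eq h0, le_div_iff₀ (by positivity), div_mul_comm]
    exact h _ _ hx hy
  intro t
  simpa only [zero_smul, add_zero] using
    apply_zero_le_of_forall_apply_tanh_le (convexOn_norm_add_smul a b) hpq hne tanh_le t
end

section
/- Let X be a real inner product space, let r > 0, and let x, y ∈ X be nonzero vectors with x ≠ y. Set A = (‖x−y‖ − |‖x‖−‖y‖|)/min{‖x‖,‖y‖}, B = (‖x−y‖ + |‖x‖−‖y‖|)/max{‖x‖,‖y‖}, and c = (max{‖x‖,‖y‖}/min{‖x‖,‖y‖})·((‖x−y‖ − |‖x‖−‖y‖|)/(‖x−y‖ + |‖x‖−‖y‖|)) (so that c = A/B). Then ((1 + c^r)/2)^{−1/r}·A ≤ α[x,y] ≤ ((1 + c^r)/2)^{1/r}·B. -/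
/-!
In an inner product space the angular distance is exactly the geometric mean of the two quantities
`A` and `B`: expanding the norms gives
`α[x,y]² = (‖x - y‖² - (‖x‖ - ‖y‖)²) / (‖x‖ ‖y‖) = A * B`. Since `A = c * B`, this says
`α[x,y] = √c * B`, and the bounds are the comparison of the geometric mean `√c` of `1` and `c`
with their power means of exponents `r` and `-r`.
-/

section PowerMean

variable {p : ℝ}

theorem geom_mean_le_rpow_mean_weighted {ι : Type*} (s : Finset ι) (w z : ι → ℝ)
    (hw : ∀ i ∈ s, 0 ≤ w i) (hw' : ∑ i ∈ s, w i = 1) (hz : ∀ i ∈ s, 0 ≤ z i) (hp : 0 < p) :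
    ∏ i ∈ s, z i ^ w i ≤ (∑ i ∈ s, w i * z i ^ p) ^ (1 / p) := by
  have hzw : ∀ i ∈ s, 0 ≤ z i ^ w i := fun i hi ↦ Real.rpow_nonneg (hz i hi) _
  have hzp : ∀ i ∈ s, 0 ≤ z i ^ p := fun i hi ↦ Real.rpow_nonneg (hz i hi) _
  rw [one_div, Real.le_rpow_inv_iff_of_pos (Finset.prod_nonneg hzw)
    (Finset.sum_nonneg fun i hi ↦ mul_nonneg (hw i hi) (hzp i hi)) hp]
  calc (∏ i ∈ s, z i ^ w i) ^ p
      = ∏ i ∈ s, (z i ^ w i) ^ p :=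
        (Real.finsetProd_rpow s _ hzw p).symm
    _ = ∏ i ∈ s, (z i ^ p) ^ w i :=
        Finset.prod_congr rfl fun i hi ↦ by
          rw [← Real.rpow_mul (hz i hi), mul_comm, Real.rpow_mul (hz i hi)]
    _ ≤ ∑ i ∈ s, w i * z i ^ p :=
        Real.geom_mean_le_arith_mean_weighted s w _ hw hw' hzp

theorem sqrt_mul_le_rpow_mean {a b : ℝ} (ha : 0 ≤ a) (hb : 0 ≤ b) (hp : 0 < p) :
    √(a * b) ≤ ((a ^ p + b ^ p) / 2) ^ (1 / p) := by
  have h := geom_mean_le_rpow_mean_weighted Finset.univ (fun _ ↦ 1 / 2) ![a, b]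
    (by simp) (by simp) (by simp [Fin.forall_fin_two, ha, hb]) hp
  simp only [Fin.prod_univ_two, Fin.sum_univ_two, Matrix.cons_val_zero, Matrix.cons_val_one] at h
  rw [Real.sqrt_mul ha, Real.sqrt_eq_rpow, Real.sqrt_eq_rpow]
  convert h using 2
  ring

-- The left side is the power mean of exponent `-p`, in a form that is also right if `a * b = 0`.
theorem rpow_neg_mean_mul_le_sqrt_mul {a b : ℝ} (ha : 0 ≤ a) (hb : 0 ≤ b) (hp : 0 < p) :
    ((a ^ p + b ^ p) / 2) ^ (-1 / p) * (a * b) ≤ √(a * b) := by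
  have hmean : 0 ≤ (a ^ p + b ^ p) / 2 := by positivity
  rw [neg_div, Real.rpow_neg hmean]
  refine inv_mul_le_of_le_mul₀ (Real.rpow_nonneg hmean _) (Real.sqrt_nonneg _) ?_
  calc a * b = √(a * b) * √(a * b) := (Real.mul_self_sqrt (mul_nonneg ha hb)).symm
    _ ≤ ((a ^ p + b ^ p) / 2) ^ (1 / p) * √(a * b) :=
      mul_le_mul_of_nonneg_right (sqrt_mul_le_rpow_mean ha hb hp) (Real.sqrt_nonneg _)

end PowerMean

section AngularDistance

variable {X : Type*} [NormedAddCommGroup X] [InnerProductSpace ℝ X]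

theorem norm_smul_sub_smul_sq (s t : ℝ) (x y : X) :
    ‖s • x - t • y‖ ^ 2 = s * t * ‖x - y‖ ^ 2 + (s - t) * (s * ‖x‖ ^ 2 - t * ‖y‖ ^ 2) := by
  rw [norm_sub_sq_real, norm_sub_sq_real, real_inner_smul_left, real_inner_smul_right,
    norm_smul, norm_smul, mul_pow, mul_pow, Real.norm_eq_abs, Real.norm_eq_abs, sq_abs, sq_abs]
  ring

theorem angularD_eq_sqrt_mul {x y : X} (hx : x ≠ 0) (hy : y ≠ 0) :
    angularD x y = √((‖x - y‖ - |‖x‖ - ‖y‖|) / min ‖x‖ ‖y‖ *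
      ((‖x - y‖ + |‖x‖ - ‖y‖|) / max ‖x‖ ‖y‖)) := by
  have hnonneg : 0 ≤ angularD x y := norm_nonneg _
  rw [← Real.sqrt_sq hnonneg, angularD_sq hx hy, div_mul_div_comm, min_mul_max,
    ← sq_abs (‖x‖ - ‖y‖)]
  ring_nf

end AngularDistance

theorem refined_angular_bounds_inner
    {X : Type*} [NormedAddCommGroup X] [InnerProductSpace ℝ X]
    (r : ℝ) (hr : 0 < r) (x y : X) (hx : x ≠ 0) (hy : y ≠ 0) (hxy : x ≠ y)
    (A B c : ℝ)
    (hA : A = (‖x - y‖ - |‖x‖ - ‖y‖|) / min ‖x‖ ‖y‖)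
    (hB : B = (‖x - y‖ + |‖x‖ - ‖y‖|) / max ‖x‖ ‖y‖)
    (hc : c = (max ‖x‖ ‖y‖ / min ‖x‖ ‖y‖) *
        ((‖x - y‖ - |‖x‖ - ‖y‖|) / (‖x - y‖ + |‖x‖ - ‖y‖|))) :
    ((1 + c ^ r) / 2) ^ (-1 / r) * A ≤ angularD x y ∧
      angularD x y ≤ ((1 + c ^ r) / 2) ^ (1 / r) * B := by
  have hsub : 0 < ‖x - y‖ := norm_sub_pos_iff.mpr hxy
  have hA0 : 0 ≤ A := hA ▸ div_nonneg (sub_nonneg.mpr (abs_norm_sub_norm_le x y)) (by positivity)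
  have hB0 : 0 < B := hB ▸ by positivity
  have hcAB : c = A / B := by rw [hc, hA, hB, div_div_div_eq, div_mul_div_comm, mul_comm (max _ _)]
  have hc0 : 0 ≤ c := hcAB ▸ div_nonneg hA0 hB0.le
  have hAcB : A = c * B := by rw [hcAB, div_mul_cancel₀ _ hB0.ne']
  have hα : angularD x y = √c * B := by
    rw [angularD_eq_sqrt_mul hx hy, ← hA, ← hB, hAcB, mul_assoc, Real.sqrt_mul hc0,
      Real.sqrt_mul_self hB0.le]
  have hlower := rpow_neg_mean_mul_le_sqrt_mul zero_le_one hc0 hr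
  have hupper := sqrt_mul_le_rpow_mean zero_le_one hc0 hr
  rw [Real.one_rpow, one_mul] at hlower hupper
  rw [hα]
  refine ⟨?_, mul_le_mul_of_nonneg_right hupper hB0.le⟩
  rw [hAcB, ← mul_assoc]
  exact mul_le_mul_of_nonneg_right hlower hB0.le
end

section
/- Let X be a real normed linear space and let 0 < r ≤ 1. Then X is an inner product space (i.e., its norm satisfies the parallelogram law ‖x+y‖² + ‖x−y‖² = 2‖x‖² + 2‖y‖² for all x, y ∈ X) if and only if for all nonzero vectors x, y ∈ X with x ≠ y: α[x,y] ≤ ((1 + c[x,y]^r)/2)^{1/r}·((‖x−y‖ + |‖x‖−‖y‖|)/max{‖x‖,‖y‖}), where c[x,y] = (max{‖x‖,‖y‖}/min{‖x‖,‖y‖})·((‖x−y‖ − |‖x‖−‖y‖|)/(‖x−y‖ + |‖x‖−‖y‖|)). -/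
/-!
Maligranda's inequalities place the angular distance `α[x,y]` between
`L = (‖x - y‖ - |‖x‖ - ‖y‖|) / min ‖x‖ ‖y‖` and `U = (‖x - y‖ + |‖x‖ - ‖y‖|) / max ‖x‖ ‖y‖`.
Since `c[x,y] = L / U`, the bound of the theorem is the `r`-th power mean of `U` and `L`. In an
inner product space `α[x,y]` is their geometric mean, which is at most the power mean.

Conversely, for `r ≤ 1` the bound gives `α[x,y] ≤ (U + L) / 2`. Applied to the vectors
`(1 + e) • (m + h)` and `(1 - e) • (h - m)` with `‖m + h‖ = ‖m - h‖`, this says that along a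
chord of a sphere the norm dominates the parabola through its values at the midpoint and the
endpoints. Hence the midpoint of a chord has the least norm on the whole line, and all chords on
one line share their midpoint: isosceles orthogonality is homogeneous. By a theorem of James this
forces the parallelogram law.
-/

open Filter

section PowerMean

variable {r a b : ℝ}

/-- The power mean of exponent `r` of two real numbers, meant for `r ≠ 0` and `0 ≤ a, b`. -/
noncomputable def powerMean (r a b : ℝ) : ℝ :=
  ((a ^ r + b ^ r) / 2) ^ (1 / r)

lemma powerMean_mul_left {t : ℝ} (hr : r ≠ 0) (ht : 0 ≤ t) (ha : 0 ≤ a) (hb : 0 ≤ b) :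
    powerMean r (t * a) (t * b) = t * powerMean r a b := by
  unfold powerMean
  rw [Real.mul_rpow ht ha, Real.mul_rpow ht hb, ← mul_add, mul_div_assoc,
    Real.mul_rpow (Real.rpow_nonneg ht r) (by positivity), one_div, Real.rpow_rpow_inv ht hr]

lemma sqrt_mul_le_powerMean (hr : 0 < r) (ha : 0 ≤ a) (hb : 0 ≤ b) :
    √(a * b) ≤ powerMean r a b := by
  have rpow_sqrt_sq {c : ℝ} (hc : 0 ≤ c) : (√c ^ r) ^ 2 = c ^ r := by
    rw [Real.rpow_pow_comm (Real.sqrt_nonneg c), Real.sq_sqrt hc]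
  have am_gm : √(a * b) ^ r ≤ (a ^ r + b ^ r) / 2 := by
    rw [Real.sqrt_mul ha, Real.mul_rpow (Real.sqrt_nonneg a) (Real.sqrt_nonneg b),
      ← rpow_sqrt_sq ha, ← rpow_sqrt_sq hb]
    linarith [two_mul_le_add_sq (√a ^ r) (√b ^ r)]
  calc √(a * b) = (√(a * b) ^ r) ^ (1 / r) := by
        rw [one_div, Real.rpow_rpow_inv (Real.sqrt_nonneg _) hr.ne']
    _ ≤ powerMean r a b := by unfold powerMean; gcongr

lemma powerMean_le_add_div_two (hr : 0 < r) (hr1 : r ≤ 1) (ha : 0 ≤ a) (hb : 0 ≤ b) :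
    powerMean r a b ≤ (a + b) / 2 := by
  have concave : (a ^ r + b ^ r) / 2 ≤ ((a + b) / 2) ^ r := by
    have h := (Real.concaveOn_rpow hr.le hr1).2 ha hb one_half_pos.le one_half_pos.le (add_halves 1)
    rwa [smul_eq_mul, smul_eq_mul, smul_eq_mul, smul_eq_mul, ← mul_add, ← mul_add,
      one_div_mul_eq_div, one_div_mul_eq_div] at h
  calc powerMean r a b ≤ (((a + b) / 2) ^ r) ^ (1 / r) := by unfold powerMean; gcongr
    _ = (a + b) / 2 := by rw [one_div, Real.rpow_rpow_inv (by positivity) hr.ne']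

end PowerMean

section IsoscelesOrthogonal

variable {X : Type*} [NormedAddCommGroup X]

/-- Isosceles orthogonality, in the sense of James, in a normed space. -/
def IsoscelesOrthogonal (x y : X) : Prop :=
  ‖x + y‖ = ‖x - y‖

namespace IsoscelesOrthogonal

variable {x y : X}

lemma symm (h : IsoscelesOrthogonal x y) : IsoscelesOrthogonal y x := by
  rwa [IsoscelesOrthogonal, add_comm, norm_sub_rev]

lemma neg_right (h : IsoscelesOrthogonal x y) : IsoscelesOrthogonal x (-y) := by
  rw [IsoscelesOrthogonal, ← sub_eq_add_neg, sub_neg_eq_add]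
  exact Eq.symm h

lemma norm_le_norm_add [NormedSpace ℝ X] (h : IsoscelesOrthogonal x y) : ‖x‖ ≤ ‖x + y‖ := by
  have := norm_add_le (x + y) (x - y)
  rw [show x + y + (x - y) = (2 : ℝ) • x by module, norm_smul, Real.norm_two, ← h] at this
  linarith

end IsoscelesOrthogonal

lemma isoscelesOrthogonal_add_sub [NormedSpace ℝ X] {x y : X} (h : ‖x‖ = ‖y‖) :
    IsoscelesOrthogonal (x + y) (x - y) := by
  rw [IsoscelesOrthogonal, show x + y + (x - y) = (2 : ℝ) • x by module,
    show x + y - (x - y) = (2 : ℝ) • y by module, norm_smul, norm_smul, h]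

end IsoscelesOrthogonal

section HomogeneousOrthogonality

variable {X : Type*} [NormedAddCommGroup X] [NormedSpace ℝ X] {x y : X}

variable (X) in
/-- Homogeneity of isosceles orthogonality. Only the right argument is scaled, since the relation
is symmetric. -/
def HomogeneousOrthogonality : Prop :=
  ∀ ⦃x y : X⦄, IsoscelesOrthogonal x y → ∀ t : ℝ, IsoscelesOrthogonal x (t • y)

lemma tendsto_norm_add_smul_atTop (x : X) (hy : y ≠ 0) :
    Tendsto (fun t : ℝ ↦ ‖x + t • y‖) atTop atTop := by
  have lower (t : ℝ) : t * ‖y‖ - ‖x‖ ≤ ‖x + t • y‖ := by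
    have h := norm_sub_le (x + t • y) x
    rw [add_sub_cancel_left, norm_smul] at h
    have := mul_le_mul_of_nonneg_right (Real.le_norm_self t) (norm_nonneg y)
    linarith
  exact tendsto_atTop_mono lower <| tendsto_atTop_add_const_right _ _ <|
    tendsto_id.atTop_mul_const (norm_pos_iff.2 hy)

namespace HomogeneousOrthogonality

lemma orthogonal_smul_smul (H : HomogeneousOrthogonality X) (h : IsoscelesOrthogonal x y)
    (s t : ℝ) : IsoscelesOrthogonal (s • x) (t • y) :=
  (H (H h t).symm s).symm

lemma norm_smul_add_smul_comm (H : HomogeneousOrthogonality X) (h : ‖x‖ = ‖y‖) (s t : ℝ) :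
    ‖s • x + t • y‖ = ‖t • x + s • y‖ := by
  calc ‖s • x + t • y‖ = ‖((s + t) / 2) • (x + y) + ((s - t) / 2) • (x - y)‖ := by
        congr 1; module
    _ = ‖((s + t) / 2) • (x + y) - ((s - t) / 2) • (x - y)‖ :=
          H.orthogonal_smul_smul (isoscelesOrthogonal_add_sub h) _ _
    _ = ‖t • x + s • y‖ := by congr 1; module

-- The norm on the line `x + ℝ y` would be symmetric about two points, hence periodic.
lemma eq_zero_of_orthogonal_add_smul (H : HomogeneousOrthogonality X) (hy : y ≠ 0)
    (h : IsoscelesOrthogonal x y) {v : ℝ} (hv : IsoscelesOrthogonal (x + v • y) y) : v = 0 := by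
  by_contra hv0
  have periodic : Function.Periodic (fun t : ℝ ↦ ‖x + t • y‖) (2 * v) := fun t ↦
    calc ‖x + (t + 2 * v) • y‖ = ‖x + v • y + (v + t) • y‖ := by congr 1; module
      _ = ‖x + v • y - (v + t) • y‖ := H hv (v + t)
      _ = ‖x - t • y‖ := by congr 1; module
      _ = ‖x + t • y‖ := Eq.symm (H h t)
  have bounded := periodic.isBounded_of_continuous (by simpa using hv0) (by fun_prop)
  exact not_bddAbove_of_tendsto_atTop (tendsto_norm_add_smul_atTop x hy) bounded.bddAbove

lemma sq_eq_sq_of_norm_add_smul_eq (H : HomogeneousOrthogonality X) (hy : y ≠ 0)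
    (h : IsoscelesOrthogonal x y) {s t : ℝ} (hst : ‖x + s • y‖ = ‖x + t • y‖) :
    s ^ 2 = t ^ 2 := by
  rcases eq_or_ne s t with rfl | hne
  · rfl
  have hsub : (s - t) / 2 ≠ 0 := div_ne_zero (sub_ne_zero.2 hne) two_ne_zero
  have chord : IsoscelesOrthogonal (x + ((s + t) / 2) • y) (((s - t) / 2) • y) := by
    rwa [IsoscelesOrthogonal,
      show x + ((s + t) / 2) • y + ((s - t) / 2) • y = x + s • y by module,
      show x + ((s + t) / 2) • y - ((s - t) / 2) • y = x + t • y by module]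
  have mid : IsoscelesOrthogonal (x + ((s + t) / 2) • y) y := by
    simpa only [inv_smul_smul₀ hsub] using H chord ((s - t) / 2)⁻¹
  have := H.eq_zero_of_orthogonal_add_smul hy h mid
  linear_combination 2 * (s - t) * this

-- Exchange first the equally long vectors `‖x‖ • (x + y)` and `‖x + y‖ • x`, then `‖y‖ • x` and
-- `‖x‖ • y`.
lemma norm_add_smul_eq_norm_add (H : HomogeneousOrthogonality X) (hx : x ≠ 0) (hy : y ≠ 0)
    (h : IsoscelesOrthogonal x y) :
    ‖x + ((‖x + y‖ ^ 2 - ‖x‖ ^ 2) / ‖y‖ ^ 2) • y‖ = ‖x + y‖ := by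
  set n := ‖x + y‖ with hn
  set a := ‖x‖ with ha
  set b := ‖y‖ with hb
  have ha0 : 0 < a := norm_pos_iff.2 hx
  have hb0 : 0 < b := norm_pos_iff.2 hy
  have norm_eq : ‖a • (x + y)‖ = ‖n • x‖ := by
    rw [ha, hn, norm_smul, norm_smul, norm_norm, norm_norm, mul_comm]
  have norm_eq' : ‖b • x‖ = ‖a • y‖ := by
    rw [ha, hb, norm_smul, norm_smul, norm_norm, norm_norm, mul_comm]
  refine mul_left_cancel₀ (mul_pos ha0 hb0).ne' ?_
  calc a * b * ‖x + ((n ^ 2 - a ^ 2) / b ^ 2) • y‖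
      = ‖(a * b) • (x + ((n ^ 2 - a ^ 2) / b ^ 2) • y)‖ := by
        rw [norm_smul, Real.norm_of_nonneg (by positivity)]
    _ = ‖a • b • x + ((n ^ 2 - a ^ 2) / b) • a • y‖ := by
        congr 1; match_scalars <;> field_simp
    _ = ‖((n ^ 2 - a ^ 2) / b) • b • x + a • a • y‖ := H.norm_smul_add_smul_comm norm_eq' _ _
    _ = ‖(n ^ 2 - a ^ 2) • x + a ^ 2 • y‖ := by congr 1; match_scalars <;> field_simp
    _ = ‖(n ^ 2 - a ^ 2) • x - a ^ 2 • y‖ := H.orthogonal_smul_smul h _ _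
    _ = ‖(-a) • a • (x + y) + n • n • x‖ := by congr 1; module
    _ = ‖n • a • (x + y) + (-a) • n • x‖ := H.norm_smul_add_smul_comm norm_eq _ _
    _ = ‖(n * a) • y‖ := by congr 1; module
    _ = a * b * n := by rw [norm_smul, Real.norm_of_nonneg (by positivity)]; ring

lemma norm_add_sq (H : HomogeneousOrthogonality X) (h : IsoscelesOrthogonal x y) :
    ‖x + y‖ ^ 2 = ‖x‖ ^ 2 + ‖y‖ ^ 2 := by
  rcases eq_or_ne x 0 with rfl | hx
  · simp
  rcases eq_or_ne y 0 with rfl | hy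
  · simp
  have ratio : (‖x + y‖ ^ 2 - ‖x‖ ^ 2) / ‖y‖ ^ 2 = 1 := by
    have nonneg : 0 ≤ (‖x + y‖ ^ 2 - ‖x‖ ^ 2) / ‖y‖ ^ 2 :=
      div_nonneg (sub_nonneg.2 (by gcongr; exact h.norm_le_norm_add)) (sq_nonneg _)
    refine (sq_eq_sq₀ nonneg zero_le_one).1 (H.sq_eq_sq_of_norm_add_smul_eq hy h ?_)
    rw [one_smul, H.norm_add_smul_eq_norm_add hx hy h]
  rw [div_eq_one_iff_eq (by simpa using hy)] at ratio
  linarith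

lemma norm_smul_add_smul_sq (H : HomogeneousOrthogonality X) (h : IsoscelesOrthogonal x y)
    (s t : ℝ) : ‖s • x + t • y‖ ^ 2 = s ^ 2 * ‖x‖ ^ 2 + t ^ 2 * ‖y‖ ^ 2 := by
  rw [H.norm_add_sq (H.orthogonal_smul_smul h s t)]
  simp [norm_smul, mul_pow]

theorem parallelogram_law (H : HomogeneousOrthogonality X) (x y : X) :
    ‖x + y‖ ^ 2 + ‖x - y‖ ^ 2 = 2 * ‖x‖ ^ 2 + 2 * ‖y‖ ^ 2 := by
  rcases eq_or_ne x 0 with rfl | hx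
  · simp; ring
  rcases eq_or_ne y 0 with rfl | hy
  · simp; ring
  set a := ‖x‖ with ha
  set b := ‖y‖ with hb
  have ha0 : a ≠ 0 := norm_ne_zero_iff.2 hx
  have hb0 : b ≠ 0 := norm_ne_zero_iff.2 hy
  -- The diagonals of the rhombus spanned by `b • x` and `a • y`.
  set u := b • x + a • y with hu
  set v := b • x - a • y with hv
  have orth : IsoscelesOrthogonal u v := isoscelesOrthogonal_add_sub <| by
    rw [ha, hb, norm_smul, norm_smul, norm_norm, norm_norm, mul_comm]
  have diagonals : ‖u‖ ^ 2 + ‖v‖ ^ 2 = (2 * b * a) ^ 2 := by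
    rw [← H.norm_add_sq orth, show u + v = (2 * b) • x by rw [hu, hv]; module, norm_smul,
      Real.norm_of_nonneg (by positivity)]
  have sum_eq : x + y = ((2 * b)⁻¹ + (2 * a)⁻¹) • u + ((2 * b)⁻¹ - (2 * a)⁻¹) • v := by
    rw [hu, hv]; match_scalars <;> field_simp <;> ring
  have diff_eq : x - y = ((2 * b)⁻¹ - (2 * a)⁻¹) • u + ((2 * b)⁻¹ + (2 * a)⁻¹) • v := by
    rw [hu, hv]; match_scalars <;> field_simp <;> ring
  calc ‖x + y‖ ^ 2 + ‖x - y‖ ^ 2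
      = 2 * ((2 * b)⁻¹ ^ 2 + (2 * a)⁻¹ ^ 2) * (‖u‖ ^ 2 + ‖v‖ ^ 2) := by
        rw [sum_eq, diff_eq, H.norm_smul_add_smul_sq orth, H.norm_smul_add_smul_sq orth]; ring
    _ = 2 * a ^ 2 + 2 * b ^ 2 := by rw [diagonals]; field_simp

end HomogeneousOrthogonality

end HomogeneousOrthogonality

section ChordParabolaBound

variable {X : Type*} [NormedAddCommGroup X] [NormedSpace ℝ X] {m h : X}

variable (X) in
/-- On every chord of a sphere about the origin, the norm dominates the quadratic polynomial that
agrees with it at the midpoint and the endpoints. The chord runs from `m - h` to `m + h`. -/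
def ChordParabolaBound : Prop :=
  ∀ ⦃m h : X⦄, IsoscelesOrthogonal m h → ∀ e : ℝ, |e| < 1 →
    (1 - e ^ 2) * ‖m‖ + e ^ 2 * ‖m + h‖ ≤ ‖m + e • h‖

namespace ChordParabolaBound

lemma norm_le_norm_add_smul (K : ChordParabolaBound X) (hmh : IsoscelesOrthogonal m h) (t : ℝ) :
    ‖m‖ ≤ ‖m + t • h‖ := by
  have near {e : ℝ} (he : |e| < 1) : ‖m‖ ≤ ‖m + e • h‖ := by
    have := mul_le_mul_of_nonneg_left hmh.norm_le_norm_add (sq_nonneg e)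
    linarith [K hmh e he]
  -- By convexity a local minimum is global: move from `m` a small fraction `s` towards `m + t • h`.
  set s := (1 + |t|)⁻¹ with hs
  have hs0 : 0 < s := by positivity
  have hs1 : s ≤ 1 := inv_le_one_of_one_le₀ (by linarith [abs_nonneg t])
  have hst : |s * t| < 1 := by
    rw [abs_mul, abs_of_pos hs0, hs, inv_mul_lt_one₀ (by positivity)]
    linarith
  have convex : ‖m‖ ≤ (1 - s) * ‖m‖ + s * ‖m + t • h‖ :=
    calc ‖m‖ ≤ ‖m + (s * t) • h‖ := near hst
      _ = ‖(1 - s) • m + s • (m + t • h)‖ := by congr 1; module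
      _ ≤ (1 - s) * ‖m‖ + s * ‖m + t • h‖ := by
        refine (norm_add_le _ _).trans_eq ?_
        rw [norm_smul, norm_smul, Real.norm_of_nonneg hs0.le,
          Real.norm_of_nonneg (sub_nonneg.2 hs1)]
  exact le_of_mul_le_mul_left (by linarith) hs0

lemma norm_add_smul_le_norm_sub_smul (K : ChordParabolaBound X) (hmh : IsoscelesOrthogonal m h)
    {t : ℝ} (ht : 0 ≤ t) : ‖m + t • h‖ ≤ ‖m - t • h‖ := by
  by_contra! hlt
  have hh : h ≠ 0 := by rintro rfl; simp at hlt
  have ht0 : 0 < t := ht.lt_of_ne (by rintro rfl; simp at hlt)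
  obtain ⟨s, hs, hst⟩ : ∃ s, t ≤ s ∧ ‖m - s • h‖ = ‖m + t • h‖ := by
    have tendsto : Tendsto (fun s : ℝ ↦ ‖m - s • h‖) atTop atTop := by
      simpa [sub_eq_add_neg] using tendsto_norm_add_smul_atTop m (neg_ne_zero.2 hh)
    exact isPreconnected_Ici.intermediate_value_Ici Set.self_mem_Ici
      (le_principal_iff.2 (Ici_mem_atTop t)) (by fun_prop) tendsto hlt.le
  have hts : t < s := hs.lt_of_ne (by rintro rfl; exact hlt.ne hst)
  -- `m` lies off the midpoint `c` of the chord from `m - s • h` to `m + t • h`.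
  set c := m + ((t - s) / 2) • h with hc
  set k := ((t + s) / 2) • h with hk
  set e := (s - t) / (t + s) with he
  have hpos : 0 < t + s := by linarith
  have he0 : 0 < e := div_pos (by linarith) hpos
  have he1 : e < 1 := by rw [he, div_lt_one hpos]; linarith
  have top : c + k = m + t • h := by rw [hc, hk]; module
  have bottom : c - k = m - s • h := by rw [hc, hk]; module
  have on_chord : c + e • k = m := by
    rw [hc, hk, he]; match_scalars <;> field_simp; ring
  have orth : IsoscelesOrthogonal c k := by rw [IsoscelesOrthogonal, top, bottom, hst]
  have parabola := K orth e (abs_lt.2 ⟨by linarith, he1⟩)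
  rw [on_chord, top] at parabola
  have le_mid : ‖m‖ ≤ ‖c‖ := K.norm_le_norm_add_smul hmh _
  have le_end : ‖m‖ ≤ ‖m - t • h‖ := by
    simpa [sub_eq_add_neg] using K.norm_le_norm_add_smul hmh (-t)
  have he2 : 0 ≤ 1 - e ^ 2 := by nlinarith
  have : 0 < e ^ 2 * (‖m + t • h‖ - ‖m‖) := mul_pos (by positivity) (by linarith)
  linarith [mul_le_mul_of_nonneg_left le_mid he2]

theorem homogeneousOrthogonality (K : ChordParabolaBound X) : HomogeneousOrthogonality X := by
  have nonneg {m h : X} (hmh : IsoscelesOrthogonal m h) {t : ℝ} (ht : 0 ≤ t) :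
      IsoscelesOrthogonal m (t • h) :=
    (K.norm_add_smul_le_norm_sub_smul hmh ht).antisymm <| by
      simpa [← sub_eq_add_neg] using K.norm_add_smul_le_norm_sub_smul hmh.neg_right ht
  intro m h hmh t
  rcases le_total 0 t with ht | ht
  · exact nonneg hmh ht
  · simpa using nonneg hmh.neg_right (neg_nonneg.2 ht)

end ChordParabolaBound

end ChordParabolaBound

section AngularDistance

variable {X : Type*} [NormedAddCommGroup X] {x y : X}

/-- Maligranda's lower bound for the angular distance. It is `0` if `x = 0` or `y = 0`. -/
noncomputable def angularLower (x y : X) : ℝ :=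
  (‖x - y‖ - |‖x‖ - ‖y‖|) / min ‖x‖ ‖y‖

/-- Maligranda's upper bound for the angular distance. -/
noncomputable def angularUpper (x y : X) : ℝ :=
  (‖x - y‖ + |‖x‖ - ‖y‖|) / max ‖x‖ ‖y‖

lemma angularLower_nonneg (x y : X) : 0 ≤ angularLower x y :=
  div_nonneg (sub_nonneg.2 (abs_norm_sub_norm_le x y)) (by positivity)

lemma angularUpper_nonneg (x y : X) : 0 ≤ angularUpper x y := by
  unfold angularUpper
  positivity

lemma angularUpper_pos (hxy : x ≠ y) : 0 < angularUpper x y := by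
  have sub_pos : 0 < ‖x - y‖ := norm_sub_pos_iff.2 hxy
  have max_pos : 0 < max ‖x‖ ‖y‖ := by
    rw [lt_max_iff, norm_pos_iff, norm_pos_iff]
    grind
  unfold angularUpper
  positivity

lemma angularUpper_mul_angularLower (x y : X) :
    angularUpper x y * angularLower x y =
      (‖x - y‖ ^ 2 - (‖x‖ - ‖y‖) ^ 2) / (‖x‖ * ‖y‖) := by
  rw [angularUpper, angularLower, div_mul_div_comm, max_mul_min, ← sq_abs (‖x‖ - ‖y‖)]
  ring

lemma angularLower_div_angularUpper (x y : X) :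
    angularLower x y / angularUpper x y =
      max ‖x‖ ‖y‖ / min ‖x‖ ‖y‖ *
        ((‖x - y‖ - |‖x‖ - ‖y‖|) / (‖x - y‖ + |‖x‖ - ‖y‖|)) := by
  rw [angularLower, angularUpper, div_div_div_eq, div_mul_div_comm, mul_comm (max _ _)]

lemma powerMean_angularUpper_angularLower {r : ℝ} (hr : r ≠ 0) (hxy : x ≠ y) :
    powerMean r (angularUpper x y) (angularLower x y) =
      ((1 + (max ‖x‖ ‖y‖ / min ‖x‖ ‖y‖ *
        ((‖x - y‖ - |‖x‖ - ‖y‖|) / (‖x - y‖ + |‖x‖ - ‖y‖|))) ^ r) / 2) ^ (1 / r) *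
          ((‖x - y‖ + |‖x‖ - ‖y‖|) / max ‖x‖ ‖y‖) := by
  have hU := angularUpper_pos hxy
  have hL := angularLower_nonneg x y
  calc powerMean r (angularUpper x y) (angularLower x y)
      = angularUpper x y * powerMean r 1 (angularLower x y / angularUpper x y) := by
        rw [← powerMean_mul_left hr hU.le zero_le_one (div_nonneg hL hU.le), mul_one,
          mul_div_cancel₀ _ hU.ne']
    _ = _ := by
        rw [mul_comm, angularLower_div_angularUpper, powerMean, Real.one_rpow, angularUpper]

lemma angularD_eq_sqrt_angularUpper_mul_angularLower [InnerProductSpace ℝ X]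
    (hx : x ≠ 0) (hy : y ≠ 0) :
    angularD x y = √(angularUpper x y * angularLower x y) := by
  have hx' : ‖x‖ ≠ 0 := norm_ne_zero_iff.2 hx
  have hy' : ‖y‖ ≠ 0 := norm_ne_zero_iff.2 hy
  refine (Real.sqrt_eq_iff_eq_sq ?_ ?_).2 ?_ |>.symm
  · exact mul_nonneg (angularUpper_nonneg x y) (angularLower_nonneg x y)
  · exact norm_nonneg _
  rw [angularUpper_mul_angularLower, angularD, norm_sub_sq_real, norm_sub_sq_real,
    real_inner_smul_left, real_inner_smul_right]
  simp only [norm_smul, norm_inv, norm_norm]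
  field_simp
  ring

lemma angularUpper_add_angularLower_div_two {N e : ℝ} (hN : 0 < N) (he0 : 0 ≤ e) (he1 : e < 1)
    (hx : ‖x‖ = (1 + e) * N) (hy : ‖y‖ = (1 - e) * N) :
    (angularUpper x y + angularLower x y) / 2 = (‖x - y‖ - 2 * e ^ 2 * N) / (1 - e ^ 2) / N := by
  have e_sub : 0 < 1 - e := sub_pos.2 he1
  have norm_le : (1 - e) * N ≤ (1 + e) * N := by gcongr; linarith
  rw [angularUpper, angularLower, hx, hy, max_eq_left norm_le, min_eq_right norm_le,
    abs_of_nonneg (sub_nonneg.2 norm_le), show 1 - e ^ 2 = (1 - e) * (1 + e) by ring]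
  field_simp
  ring

variable [NormedSpace ℝ X]

lemma angularD_smul_smul {s t : ℝ} (hs : 0 < s) (ht : 0 < t) (x y : X) :
    angularD (s • x) (t • y) = angularD x y := by
  simp only [angularD, norm_smul, Real.norm_of_nonneg hs.le, Real.norm_of_nonneg ht.le, mul_inv,
    smul_smul]
  congr! 3 <;> field_simp

lemma angularD_of_norm_eq (h : ‖x‖ = ‖y‖) : angularD x y = ‖x - y‖ / ‖x‖ := by
  rw [angularD, ← h, ← smul_sub, norm_smul, norm_inv, norm_norm, inv_mul_eq_div]

-- The difference of `(1 + e) • (m + h)` and `(1 - e) • (h - m)` is `2 • (m + e • h)`, that of their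
-- directions a multiple of `m`.
lemma chordParabolaBound_of_angularD_le
    (H : ∀ x y : X, x ≠ 0 → y ≠ 0 → angularD x y ≤ (angularUpper x y + angularLower x y) / 2) :
    ChordParabolaBound X := by
  intro m h hmh e he
  wlog he0 : 0 ≤ e generalizing h e
  · have := this hmh.neg_right (-e) (by rwa [abs_neg]) (by linarith)
    rw [← sub_eq_add_neg, ← hmh] at this
    simpa using this
  have he1 : e < 1 := (abs_lt.1 he).2
  set N := ‖m + h‖ with hN
  rcases (norm_nonneg (m + h)).eq_or_lt with hN0 | hN0
  · have hm : ‖m‖ = 0 := le_antisymm (hN0 ▸ hmh.norm_le_norm_add) (norm_nonneg m)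
    rw [hN, ← hN0, hm]
    simp
  have norm_eq : ‖h - m‖ = N := by rw [norm_sub_rev, ← hmh]
  have e_add : 0 < 1 + e := by linarith
  have e_sub : 0 < 1 - e := sub_pos.2 he1
  have e_sq : 0 < 1 - e ^ 2 := by nlinarith
  set x := (1 + e) • (m + h) with hx
  set y := (1 - e) • (h - m) with hy
  have norm_x : ‖x‖ = (1 + e) * N := by rw [hx, norm_smul, Real.norm_of_nonneg e_add.le]
  have norm_y : ‖y‖ = (1 - e) * N := by rw [hy, norm_smul, Real.norm_of_nonneg e_sub.le, norm_eq]
  have norm_sub : ‖x - y‖ = 2 * ‖m + e • h‖ := by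
    rw [show x - y = (2 : ℝ) • (m + e • h) by rw [hx, hy]; module, norm_smul, Real.norm_two]
  have angle : angularD x y = 2 * ‖m‖ / N := by
    rw [hx, hy, angularD_smul_smul e_add e_sub, angularD_of_norm_eq (hN.symm.trans norm_eq.symm),
      show m + h - (h - m) = (2 : ℝ) • m by module, norm_smul, Real.norm_two]
  have bound := H x y (norm_pos_iff.1 (by rw [norm_x]; positivity))
    (norm_pos_iff.1 (by rw [norm_y]; positivity))
  rw [angle, angularUpper_add_angularLower_div_two hN0 he0 he1 norm_x norm_y, norm_sub,
    div_le_div_iff_of_pos_right hN0, le_div_iff₀ e_sq] at bound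
  linarith

end AngularDistance

theorem refined_angular_upper_bound_characterizes_inner
    {X : Type*} [NormedAddCommGroup X] [NormedSpace ℝ X]
    (r : ℝ) (hr0 : 0 < r) (hr1 : r ≤ 1) :
    (∀ x y : X, ‖x + y‖ ^ 2 + ‖x - y‖ ^ 2 = 2 * ‖x‖ ^ 2 + 2 * ‖y‖ ^ 2) ↔
      (∀ x y : X, x ≠ 0 → y ≠ 0 → x ≠ y →
        angularD x y
          ≤ ((1 + ((max ‖x‖ ‖y‖ / min ‖x‖ ‖y‖) *
                ((‖x - y‖ - |‖x‖ - ‖y‖|) / (‖x - y‖ + |‖x‖ - ‖y‖|))) ^ r) / 2) ^ (1 / r) *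
              ((‖x - y‖ + |‖x‖ - ‖y‖|) / max ‖x‖ ‖y‖)) := by
  constructor
  · intro parallelogram x y hx hy hxy
    let _ : InnerProductSpace ℝ X :=
      .ofNorm ℝ fun x y ↦ by linear_combination parallelogram x y
    rw [← powerMean_angularUpper_angularLower hr0.ne' hxy]
    exact (angularD_eq_sqrt_angularUpper_mul_angularLower hx hy).trans_le <|
      sqrt_mul_le_powerMean hr0 (angularUpper_nonneg x y) (angularLower_nonneg x y)
  · intro bound
    suffices h : ChordParabolaBound X from h.homogeneousOrthogonality.parallelogram_law
    refine chordParabolaBound_of_angularD_le fun x y hx hy ↦ ?_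
    have hU := angularUpper_nonneg x y
    have hL := angularLower_nonneg x y
    rcases eq_or_ne x y with rfl | hxy
    · simpa [angularD] using div_nonneg (add_nonneg hU hL) zero_le_two
    have le_powerMean := bound x y hx hy hxy
    rw [← powerMean_angularUpper_angularLower hr0.ne' hxy] at le_powerMean
    exact le_powerMean.trans <| powerMean_le_add_div_two hr0 hr1 hU hL
end

section
/- Let X be a real normed linear space of dimension at least 3 and let p ∈ ℝ, p ≠ 0. Then X is an inner product space (i.e., its norm satisfies the parallelogram law ‖x+y‖² + ‖x−y‖² = 2‖x‖² + 2‖y‖² for all x, y ∈ X) if and only if for all nonzero vectors x, y ∈ X: α_p[x,y] ≥ (2‖x‖^p‖y‖^p·α[x,y] + (‖x‖^p − ‖y‖^p)²)/(‖x‖^p + ‖y‖^p). -/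
/-!
Only the unit vectors `u = x / ‖x‖`, `v = y / ‖y‖` and the weights `a = ‖x‖ ^ p`, `b = ‖y‖ ^ p`
enter the inequality, and for `p ≠ 0` the weights are arbitrary positive numbers. In an inner
product space the resulting bound `2ab‖u - v‖ + (a - b)² ≤ (a + b)‖au - bv‖` holds because the
difference of the squares of the two sides is `ab(a - b)²(2 - ‖u - v‖)²`.

Conversely, with `a = 1 + s` and `b = 1 - s` the bound says that `‖x + y‖ = ‖x - y‖` forces
`‖x‖ + s²(‖x + y‖ - ‖x‖) ≤ ‖x + s y‖` for `|s| < 1`. Hence an isosceles pair sits at a minimum of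
the convex function `s ↦ ‖x + s y‖`, and that minimum is unique. Every pair of points at the same
level, `x + (s ± t) y`, is centred at a minimum, so `s ↦ ‖x + s y‖` is symmetric about its
minimizer: isosceles orthogonality implies Roberts orthogonality. This is Ficken's condition that
`‖a x + b y‖ = ‖b x + a y‖` whenever `‖x‖ = ‖y‖`. It makes the bracket built from the Roberts
orthogonal projections symmetric, and a symmetric bracket satisfies the law of cosines.
-/

open Filter

section Line

variable {X : Type*} [NormedAddCommGroup X] [NormedSpace ℝ X]

lemma tendsto_norm_add_smul_cocompact (x : X) {y : X} (hy : y ≠ 0) :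
    Tendsto (fun s : ℝ => ‖x + s • y‖) (cocompact ℝ) atTop := by
  have hlower : Tendsto (fun s : ℝ => ‖s‖ * ‖y‖ + -‖x‖) (cocompact ℝ) atTop :=
    tendsto_atTop_add_const_right _ _
      (tendsto_norm_cocompact_atTop.atTop_mul_const (norm_pos_iff.mpr hy))
  refine tendsto_atTop_mono (fun s => ?_) hlower
  rw [← norm_smul, ← sub_eq_add_neg, add_comm x]
  exact norm_sub_le_norm_add _ _

lemma exists_norm_add_smul_le (x : X) {y : X} (hy : y ≠ 0) :
    ∃ s₀ : ℝ, ∀ s : ℝ, ‖x + s₀ • y‖ ≤ ‖x + s • y‖ :=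
  Continuous.exists_forall_le (by fun_prop) (tendsto_norm_add_smul_cocompact x hy)

lemma exists_norm_add_eq_norm_sub (x y : X) :
    ∃ s : ℝ, ‖x + s • y + y‖ = ‖x + s • y - y‖ := by
  rcases eq_or_ne y 0 with rfl | hy
  · simp
  obtain ⟨s₀, hmin⟩ := exists_norm_add_smul_le x hy
  let g : ℝ → ℝ := fun s => ‖x + s • y + y‖ - ‖x + s • y - y‖
  have hneg : g (s₀ - 1) ≤ 0 := by
    have hcentre : x + (s₀ - 1) • y + y = x + s₀ • y := by module
    have hfar : x + (s₀ - 1) • y - y = x + (s₀ - 2) • y := by module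
    simpa only [g, hcentre, hfar, sub_nonpos] using hmin (s₀ - 2)
  have hpos : 0 ≤ g (s₀ + 1) := by
    have hcentre : x + (s₀ + 1) • y - y = x + s₀ • y := by module
    have hfar : x + (s₀ + 1) • y + y = x + (s₀ + 2) • y := by module
    simpa only [g, hcentre, hfar, sub_nonneg] using hmin (s₀ + 2)
  obtain ⟨s, hs⟩ :=
    mem_range_of_exists_le_of_exists_ge (f := g) (by fun_prop) ⟨_, hneg⟩ ⟨_, hpos⟩
  exact ⟨s, sub_eq_zero.mp hs⟩

lemma norm_le_norm_add_of_norm_add_eq_norm_sub {x y : X} (h : ‖x + y‖ = ‖x - y‖) :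
    ‖x‖ ≤ ‖x + y‖ := by
  have hdouble : (2 : ℝ) • x = (x + y) + (x - y) := by module
  have htriangle := norm_add_le (x + y) (x - y)
  rw [← hdouble, norm_smul, Real.norm_two, ← h] at htriangle
  linarith

end Line

/-- Roberts orthogonality: the norm is symmetric about `x` along the direction `y`. -/
def RobertsOrthogonal {X : Type*} [NormedAddCommGroup X] [NormedSpace ℝ X] (x y : X) : Prop :=
  ∀ s : ℝ, ‖x + s • y‖ = ‖x - s • y‖

namespace RobertsOrthogonal

variable {X : Type*} [NormedAddCommGroup X] [NormedSpace ℝ X] {x y : X}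

lemma smul_right (h : RobertsOrthogonal x y) (b : ℝ) : RobertsOrthogonal x (b • y) := fun s => by
  simpa only [smul_smul] using h (s * b)

lemma smul_left (h : RobertsOrthogonal x y) (a : ℝ) : RobertsOrthogonal (a • x) y := fun s => by
  rcases eq_or_ne a 0 with rfl | ha
  · simp
  have hs : s • y = a • (a⁻¹ * s) • y := by rw [smul_smul, mul_inv_cancel_left₀ ha]
  rw [hs, ← smul_add, ← smul_sub, norm_smul, norm_smul, h]

/-- Two centres of symmetry would make the coercive function `s ↦ ‖x + s y‖` periodic. -/
lemma eq_zero_of_add_smul (hy : y ≠ 0) {d : ℝ} (h : RobertsOrthogonal x y)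
    (h' : RobertsOrthogonal (x + d • y) y) : d = 0 := by
  have hper : Function.Periodic (fun s : ℝ => ‖x + s • y‖) (2 * d) := fun t => by
    calc ‖x + (t + 2 * d) • y‖ = ‖x + d • y + (t + d) • y‖ := by congr 1; module
      _ = ‖x + d • y - (t + d) • y‖ := h' _
      _ = ‖x - t • y‖ := by congr 1; module
      _ = ‖x + t • y‖ := (h t).symm
  by_contra hd
  exact not_bddAbove_of_tendsto_atTop (tendsto_norm_add_smul_cocompact x hy)
    (hper.isBounded_of_continuous (by simpa using hd) (by fun_prop)).bddAbove

lemma coeff_unique (hy : y ≠ 0) {c d : ℝ} (hc : RobertsOrthogonal (x - c • y) y)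
    (hd : RobertsOrthogonal (x - d • y) y) : c = d := by
  have hshift : x - d • y = x - c • y + (c - d) • y := by module
  exact sub_eq_zero.mp (eq_zero_of_add_smul hy hc (hshift ▸ hd))

end RobertsOrthogonal

/-- The bracket `c * ‖y‖ ^ 2`, where `c • y` is the Roberts orthogonal projection of `x` onto the
line of `y`; in an inner product space it is the inner product. The coefficient `c` is arbitrary
when there is no such projection or when `y = 0`, and in the latter case the bracket is `0`. -/
noncomputable def robertsBracket {X : Type*} [NormedAddCommGroup X] [NormedSpace ℝ X]
    (x y : X) : ℝ :=
  Classical.epsilon (fun c : ℝ => RobertsOrthogonal (x - c • y) y) * ‖y‖ ^ 2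

/-- Isosceles orthogonality `‖x + y‖ = ‖x - y‖` implies Roberts orthogonality. This is Ficken's
condition for an inner product space, written for the diagonals `x + y` and `x - y`. -/
def IsoscelesImpRoberts (X : Type*) [NormedAddCommGroup X] [NormedSpace ℝ X] : Prop :=
  ∀ x y : X, ‖x + y‖ = ‖x - y‖ → RobertsOrthogonal x y

section Bracket

variable {X : Type*} [NormedAddCommGroup X] [NormedSpace ℝ X]

lemma robertsBracket_zero_right (x : X) : robertsBracket x 0 = 0 := by
  simp [robertsBracket]

lemma robertsBracket_eq {x y : X} {c : ℝ} (h : RobertsOrthogonal (x - c • y) y) :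
    robertsBracket x y = c * ‖y‖ ^ 2 := by
  rcases eq_or_ne y 0 with rfl | hy
  · simp [robertsBracket]
  · have hspec := Classical.epsilon_spec (p := fun c : ℝ => RobertsOrthogonal (x - c • y) y) ⟨c, h⟩
    rw [robertsBracket, RobertsOrthogonal.coeff_unique hy hspec h]

end Bracket

namespace IsoscelesImpRoberts

variable {X : Type*} [NormedAddCommGroup X] [NormedSpace ℝ X]

lemma exists_coeff (H : IsoscelesImpRoberts X) (x y : X) :
    ∃ c : ℝ, RobertsOrthogonal (x - c • y) y := by
  obtain ⟨s, hs⟩ := exists_norm_add_eq_norm_sub x y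
  exact ⟨-s, by simpa only [neg_smul, sub_neg_eq_add] using H _ _ hs⟩

lemma norm_smul_add_smul_comm (H : IsoscelesImpRoberts X) {x y : X} (h : ‖x‖ = ‖y‖) (a b : ℝ) :
    ‖a • x + b • y‖ = ‖b • x + a • y‖ := by
  have hdiag : RobertsOrthogonal (x + y) (x - y) := by
    apply H
    have hadd : x + y + (x - y) = (2 : ℝ) • x := by module
    have hsub : x + y - (x - y) = (2 : ℝ) • y := by module
    rw [hadd, hsub, norm_smul, norm_smul, h]
  calc ‖a • x + b • y‖ = ‖((a + b) / 2) • (x + y) + ((a - b) / 2) • (x - y)‖ := by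
        congr 1; module
    _ = ‖((a + b) / 2) • (x + y) - ((a - b) / 2) • (x - y)‖ := hdiag.smul_left _ _
    _ = ‖b • x + a • y‖ := by congr 1; module

lemma robertsBracket_smul_left (H : IsoscelesImpRoberts X) (a : ℝ) (x y : X) :
    robertsBracket (a • x) y = a * robertsBracket x y := by
  obtain ⟨c, hc⟩ := H.exists_coeff x y
  have hac : a • x - (a * c) • y = a • (x - c • y) := by module
  rw [robertsBracket_eq hc, robertsBracket_eq (hac ▸ hc.smul_left a), mul_assoc]

lemma robertsBracket_smul_right (H : IsoscelesImpRoberts X) (b : ℝ) (x y : X) :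
    robertsBracket x (b • y) = b * robertsBracket x y := by
  rcases eq_or_ne b 0 with rfl | hb
  · rw [zero_smul, robertsBracket_zero_right, zero_mul]
  obtain ⟨c, hc⟩ := H.exists_coeff x y
  have hcb : x - (c / b) • b • y = x - c • y := by rw [smul_smul, div_mul_cancel₀ _ hb]
  rw [robertsBracket_eq hc, robertsBracket_eq (hcb ▸ hc.smul_right b), norm_smul, mul_pow,
    Real.norm_eq_abs, sq_abs]
  field_simp

lemma robertsBracket_comm_of_norm_eq (H : IsoscelesImpRoberts X) {x y : X} (hxy : ‖x‖ = ‖y‖) :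
    robertsBracket x y = robertsBracket y x := by
  obtain ⟨c, hc⟩ := H.exists_coeff x y
  have hc' : RobertsOrthogonal (y - c • x) x := fun s => by
    calc ‖y - c • x + s • x‖ = ‖(s - c) • x + (1 : ℝ) • y‖ := by congr 1; module
      _ = ‖(1 : ℝ) • x + (s - c) • y‖ := H.norm_smul_add_smul_comm hxy _ _
      _ = ‖x - c • y + s • y‖ := by congr 1; module
      _ = ‖x - c • y - s • y‖ := hc s
      _ = ‖(1 : ℝ) • x + (-s - c) • y‖ := by congr 1; module
      _ = ‖(-s - c) • x + (1 : ℝ) • y‖ := H.norm_smul_add_smul_comm hxy _ _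
      _ = ‖y - c • x - s • x‖ := by congr 1; module
  rw [robertsBracket_eq hc, robertsBracket_eq hc', hxy]

lemma robertsBracket_comm (H : IsoscelesImpRoberts X) (x y : X) :
    robertsBracket x y = robertsBracket y x := by
  rcases eq_or_ne x 0 with rfl | hx
  · simpa [robertsBracket_zero_right] using H.robertsBracket_smul_left 0 0 y
  rcases eq_or_ne y 0 with rfl | hy
  · simpa [robertsBracket_zero_right] using (H.robertsBracket_smul_left 0 0 x).symm
  have hnorm : ‖‖y‖ • x‖ = ‖‖x‖ • y‖ := by
    rw [norm_smul, norm_smul, norm_norm, norm_norm, mul_comm]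
  have hscaled := H.robertsBracket_comm_of_norm_eq hnorm
  simp only [H.robertsBracket_smul_left, H.robertsBracket_smul_right] at hscaled
  rw [mul_left_comm] at hscaled
  exact mul_left_cancel₀ (norm_ne_zero_iff.mpr hy)
    (mul_left_cancel₀ (norm_ne_zero_iff.mpr hx) hscaled)

lemma robertsBracket_add_self (H : IsoscelesImpRoberts X) (x y : X) :
    robertsBracket (x + y) x = ‖x‖ ^ 2 + robertsBracket y x := by
  obtain ⟨c, hc⟩ := H.exists_coeff y x
  have hproj : x + y - (1 + c) • x = y - c • x := by module
  rw [robertsBracket_eq hc, robertsBracket_eq (hproj ▸ hc)]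
  ring

lemma robertsBracket_neg_left (H : IsoscelesImpRoberts X) (x y : X) :
    robertsBracket (-x) y = -robertsBracket x y := by
  simpa only [neg_one_smul, neg_one_mul] using H.robertsBracket_smul_left (-1) x y

lemma norm_add_sq (H : IsoscelesImpRoberts X) (x y : X) :
    ‖x + y‖ ^ 2 = ‖x‖ ^ 2 + 2 * robertsBracket x y + ‖y‖ ^ 2 := by
  have hsum : ‖x + y‖ ^ 2 = robertsBracket y (x + y) + robertsBracket x (x + y) := by
    have h := H.robertsBracket_add_self (x + y) (-x)
    rw [add_neg_cancel_comm, H.robertsBracket_neg_left] at h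
    linarith
  calc ‖x + y‖ ^ 2 = robertsBracket (y + x) y + robertsBracket (x + y) x := by
        rw [hsum, H.robertsBracket_comm y, H.robertsBracket_comm x, add_comm y x]
    _ = ‖x‖ ^ 2 + 2 * robertsBracket x y + ‖y‖ ^ 2 := by
        rw [H.robertsBracket_add_self, H.robertsBracket_add_self, H.robertsBracket_comm y x]
        ring

theorem parallelogram_law (H : IsoscelesImpRoberts X) (x y : X) :
    ‖x + y‖ ^ 2 + ‖x - y‖ ^ 2 = 2 * ‖x‖ ^ 2 + 2 * ‖y‖ ^ 2 := by
  have hneg : robertsBracket x (-y) = -robertsBracket x y := by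
    rw [H.robertsBracket_comm, H.robertsBracket_neg_left, H.robertsBracket_comm]
  rw [sub_eq_add_neg, H.norm_add_sq, H.norm_add_sq, hneg, norm_neg]
  ring

end IsoscelesImpRoberts

/-- The form of the `p`-angular distance inequality that does not involve `p`: `u` and `v` stand
for `x / ‖x‖` and `y / ‖y‖`, and `a` and `b` for `‖x‖ ^ p` and `‖y‖ ^ p`. -/
def UnitChordBound (X : Type*) [NormedAddCommGroup X] [NormedSpace ℝ X] : Prop :=
  ∀ u v : X, ‖u‖ = 1 → ‖v‖ = 1 → ∀ a b : ℝ, 0 < a → 0 < b →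
    2 * a * b * ‖u - v‖ + (a - b) ^ 2 ≤ (a + b) * ‖a • u - b • v‖

section InnerProductSpace

variable {E : Type*} [NormedAddCommGroup E] [InnerProductSpace ℝ E]

lemma norm_smul_sub_smul_sq_s19 {u v : E} (hu : ‖u‖ = 1) (hv : ‖v‖ = 1) (a b : ℝ) :
    ‖a • u - b • v‖ ^ 2 = (a - b) ^ 2 + a * b * ‖u - v‖ ^ 2 := by
  rw [norm_sub_sq_real, norm_sub_sq_real, real_inner_smul_left, real_inner_smul_right,
    norm_smul, norm_smul, hu, hv]
  simp only [Real.norm_eq_abs, mul_one, sq_abs]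
  ring

lemma unitChordBound_of_innerProductSpace : UnitChordBound E := by
  intro u v hu hv a b ha hb
  have hdiff : ((a + b) * ‖a • u - b • v‖) ^ 2 - (2 * a * b * ‖u - v‖ + (a - b) ^ 2) ^ 2 =
      a * b * ((a - b) * (2 - ‖u - v‖)) ^ 2 := by
    rw [mul_pow, norm_smul_sub_smul_sq_s19 hu hv]
    ring
  exact le_of_sq_le_sq (sub_nonneg.mp (hdiff ▸ by positivity)) (by positivity)

end InnerProductSpace

namespace UnitChordBound

variable {X : Type*} [NormedAddCommGroup X] [NormedSpace ℝ X]

lemma of_norm_eq (H : UnitChordBound X) {u v : X} (huv : ‖u‖ = ‖v‖) {a b : ℝ}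
    (ha : 0 < a) (hb : 0 < b) :
    2 * a * b * ‖u - v‖ + (a - b) ^ 2 * ‖u‖ ≤ (a + b) * ‖a • u - b • v‖ := by
  rcases eq_or_ne u 0 with rfl | hu
  · have hv : v = 0 := norm_eq_zero.mp (huv ▸ norm_zero)
    simp [hv]
  have hr : 0 < ‖u‖ := norm_pos_iff.mpr hu
  have hunit : ∀ w : X, ‖u‖ = ‖w‖ → ‖‖u‖⁻¹ • w‖ = 1 := fun w hw => by
    rw [norm_smul, norm_inv, norm_norm, ← hw, inv_mul_cancel₀ hr.ne']
  have hbound := H _ _ (hunit u rfl) (hunit v huv) a b ha hb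
  rw [smul_comm a, smul_comm b, ← smul_sub, ← smul_sub, norm_smul, norm_smul, norm_inv,
    norm_norm] at hbound
  calc 2 * a * b * ‖u - v‖ + (a - b) ^ 2 * ‖u‖
      = ‖u‖ * (2 * a * b * (‖u‖⁻¹ * ‖u - v‖) + (a - b) ^ 2) := by field_simp
    _ ≤ ‖u‖ * ((a + b) * (‖u‖⁻¹ * ‖a • u - b • v‖)) := by gcongr
    _ = (a + b) * ‖a • u - b • v‖ := by field_simp

lemma isosceles_bound (H : UnitChordBound X) {x y : X} (hxy : ‖x + y‖ = ‖x - y‖) {s : ℝ}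
    (hs : |s| < 1) : ‖x‖ + s ^ 2 * (‖x + y‖ - ‖x‖) ≤ ‖x + s • y‖ := by
  obtain ⟨hs_lower, hs_upper⟩ := abs_lt.mp hs
  have hbound := H.of_norm_eq (u := x + y) (v := y - x) (by rw [hxy, norm_sub_rev])
    (a := 1 + s) (b := 1 - s) (by linarith) (by linarith)
  have hchord : x + y - (y - x) = (2 : ℝ) • x := by module
  have hpoint : (1 + s) • (x + y) - (1 - s) • (y - x) = (2 : ℝ) • (x + s • y) := by module
  rw [hchord, hpoint, norm_smul, norm_smul, Real.norm_two] at hbound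
  linarith

/-- The bound near `x` propagates to the whole line because the norm is convex. -/
lemma isosceles_bound_global (H : UnitChordBound X) {x y : X} (hxy : ‖x + y‖ = ‖x - y‖) (s : ℝ) :
    ‖x‖ + s ^ 2 / (1 + |s|) * (‖x + y‖ - ‖x‖) ≤ ‖x + s • y‖ := by
  have hden : 0 < 1 + |s| := by positivity
  set l := (1 + |s|)⁻¹
  have hl : 0 < l := inv_pos.mpr hden
  have hl_le : l ≤ 1 := inv_le_one_of_one_le₀ (by linarith [abs_nonneg s])
  have hls : |l * s| < 1 := by
    rw [abs_mul, abs_of_pos hl, inv_mul_lt_one₀ hden]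
    linarith
  have hconvex : ‖x + (l * s) • y‖ ≤ (1 - l) * ‖x‖ + l * ‖x + s • y‖ := by
    calc ‖x + (l * s) • y‖ = ‖(1 - l) • x + l • (x + s • y)‖ := by congr 1; module
      _ ≤ ‖(1 - l) • x‖ + ‖l • (x + s • y)‖ := norm_add_le _ _
      _ = (1 - l) * ‖x‖ + l * ‖x + s • y‖ := by
        rw [norm_smul_of_nonneg (by linarith), norm_smul_of_nonneg hl.le]
  have hlocal := H.isosceles_bound hxy hls
  refine le_of_mul_le_mul_left ?_ hl
  rw [div_eq_mul_inv]
  linarith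

lemma norm_le_of_isosceles (H : UnitChordBound X) {x y : X} (hxy : ‖x + y‖ = ‖x - y‖) (s : ℝ) :
    ‖x‖ ≤ ‖x + s • y‖ := by
  have hgap : 0 ≤ s ^ 2 / (1 + |s|) * (‖x + y‖ - ‖x‖) :=
    mul_nonneg (by positivity) (sub_nonneg.mpr (norm_le_norm_add_of_norm_add_eq_norm_sub hxy))
  linarith [H.isosceles_bound_global hxy s]

/-- Two points `x + r e ± e` of equal norm, for a long multiple `e` of `y`, lie strictly above the
minimum, which makes the gap in `isosceles_bound_global` positive. -/
lemma exists_norm_add_smul_lt (H : UnitChordBound X) (x : X) {y : X} (hy : y ≠ 0) :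
    ∃ s₀ : ℝ, ∀ s : ℝ, s ≠ s₀ → ‖x + s₀ • y‖ < ‖x + s • y‖ := by
  have hy' : 0 < ‖y‖ := norm_pos_iff.mpr hy
  set t : ℝ := (‖x‖ + 1) / ‖y‖
  have ht : 0 < t := by positivity
  have ht_norm : ‖t • y‖ = ‖x‖ + 1 := by
    rw [norm_smul_of_nonneg ht.le, div_mul_cancel₀ _ hy'.ne']
  obtain ⟨r, hr⟩ := exists_norm_add_eq_norm_sub x (t • y)
  set z := x + r • t • y with hz
  have hz_le : ‖z‖ ≤ ‖x‖ := by
    have hback : z + (-r) • t • y = x := by rw [hz]; module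
    simpa only [hback] using H.norm_le_of_isosceles hr (-r)
  have hlarge : ‖t • y‖ ≤ ‖z + t • y‖ := by
    rw [add_comm z]
    exact norm_le_norm_add_of_norm_add_eq_norm_sub (by rw [add_comm, hr, norm_sub_rev])
  refine ⟨r * t, fun s hs => ?_⟩
  have hs' : s / t - r ≠ 0 := sub_ne_zero.mpr fun h => hs ((div_eq_iff ht.ne').mp h)
  have hgap : 0 < (s / t - r) ^ 2 / (1 + |s / t - r|) * (‖z + t • y‖ - ‖z‖) :=
    mul_pos (by positivity) (by linarith)
  calc ‖x + (r * t) • y‖ = ‖z‖ := by rw [mul_smul]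
    _ < ‖z + (s / t - r) • t • y‖ := by linarith [H.isosceles_bound_global hr (s / t - r)]
    _ = ‖x + s • y‖ := by
      rw [hz, add_assoc, ← add_smul, add_sub_cancel, smul_smul, div_mul_cancel₀ _ ht.ne']

lemma isoscelesImpRoberts (H : UnitChordBound X) : IsoscelesImpRoberts X := by
  intro x y hxy t
  rcases eq_or_ne (t • y) 0 with hty | hty
  · simp [hty]
  obtain ⟨s₀, hstrict⟩ := H.exists_norm_add_smul_lt x hty
  have hunique : ∀ s : ℝ, ‖x + s • t • y‖ ≤ ‖x + s₀ • t • y‖ → s = s₀ := fun s hle =>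
    by_contra fun hne => (hstrict s hne).not_ge hle
  have hzero : 0 = s₀ := hunique 0 <| by
    simpa only [zero_smul, add_zero, mul_smul] using H.norm_le_of_isosceles hxy (s₀ * t)
  obtain ⟨s, hs⟩ := exists_norm_add_eq_norm_sub x (t • y)
  have hcentre : s = s₀ := hunique s <| by
    simpa only [add_assoc, ← add_smul, add_sub_cancel] using H.norm_le_of_isosceles hs (s₀ - s)
  simpa only [hcentre, ← hzero, zero_smul, add_zero] using hs

end UnitChordBound

section PAngularDistance

variable {X : Type*} [NormedAddCommGroup X] [NormedSpace ℝ X]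

theorem parallelogram_law_iff_unitChordBound :
    (∀ x y : X, ‖x + y‖ ^ 2 + ‖x - y‖ ^ 2 = 2 * ‖x‖ ^ 2 + 2 * ‖y‖ ^ 2) ↔ UnitChordBound X := by
  refine ⟨fun h => ?_, fun H => H.isoscelesImpRoberts.parallelogram_law⟩
  let _ : InnerProductSpace ℝ X := InnerProductSpace.ofNorm ℝ fun x y => by
    simpa only [← pow_two, mul_add] using h x y
  exact unitChordBound_of_innerProductSpace

lemma alphaD_eq_norm_rpow_smul_sub (p : ℝ) {x y : X} (hx : x ≠ 0) (hy : y ≠ 0) :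
    alphaD p x y = ‖‖x‖ ^ p • ‖x‖⁻¹ • x - ‖y‖ ^ p • ‖y‖⁻¹ • y‖ := by
  rw [alphaD, Real.rpow_sub_one (norm_ne_zero_iff.mpr hx),
    Real.rpow_sub_one (norm_ne_zero_iff.mpr hy), div_eq_mul_inv, div_eq_mul_inv, mul_smul, mul_smul]

lemma exists_norm_rpow_eq {p : ℝ} (hp : p ≠ 0) {u : X} (hu : ‖u‖ = 1) {c : ℝ} (hc : 0 < c) :
    ∃ x : X, x ≠ 0 ∧ ‖x‖ ^ p = c ∧ ‖x‖⁻¹ • x = u := by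
  have hpos : 0 < c ^ p⁻¹ := Real.rpow_pos_of_pos hc _
  have hnorm : ‖c ^ p⁻¹ • u‖ = c ^ p⁻¹ := by rw [norm_smul_of_nonneg hpos.le, hu, mul_one]
  refine ⟨c ^ p⁻¹ • u, norm_pos_iff.mp (hpos.trans_eq hnorm.symm), ?_, ?_⟩
  · rw [hnorm, Real.rpow_inv_rpow hc.le hp]
  · rw [hnorm, inv_smul_smul₀ hpos.ne']

theorem unitChordBound_iff_alphaD_ge {p : ℝ} (hp : p ≠ 0) :
    UnitChordBound X ↔ ∀ x y : X, x ≠ 0 → y ≠ 0 →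
      alphaD p x y ≥ (2 * ‖x‖ ^ p * ‖y‖ ^ p * angularD x y + (‖x‖ ^ p - ‖y‖ ^ p) ^ 2) /
        (‖x‖ ^ p + ‖y‖ ^ p) := by
  constructor
  · intro H x y hx hy
    have ha : 0 < ‖x‖ ^ p := Real.rpow_pos_of_pos (norm_pos_iff.mpr hx) p
    have hb : 0 < ‖y‖ ^ p := Real.rpow_pos_of_pos (norm_pos_iff.mpr hy) p
    rw [ge_iff_le, div_le_iff₀' (add_pos ha hb), alphaD_eq_norm_rpow_smul_sub p hx hy]
    exact H _ _ (norm_smul_inv_norm hx) (norm_smul_inv_norm hy) _ _ ha hb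
  · intro h u v hu hv a b ha hb
    obtain ⟨x, hx, rfl, rfl⟩ := exists_norm_rpow_eq hp hu ha
    obtain ⟨y, hy, rfl, rfl⟩ := exists_norm_rpow_eq hp hv hb
    have hxy := h x y hx hy
    rwa [ge_iff_le, div_le_iff₀' (add_pos ha hb), alphaD_eq_norm_rpow_smul_sub p hx hy] at hxy

theorem pAngular_lower_bound_characterizes_inner_general {p : ℝ} (hp : p ≠ 0) :
    (∀ x y : X, ‖x + y‖ ^ 2 + ‖x - y‖ ^ 2 = 2 * ‖x‖ ^ 2 + 2 * ‖y‖ ^ 2) ↔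
      (∀ x y : X, x ≠ 0 → y ≠ 0 →
        alphaD p x y
          ≥ (2 * ‖x‖ ^ p * ‖y‖ ^ p * angularD x y + (‖x‖ ^ p - ‖y‖ ^ p) ^ 2) /
              (‖x‖ ^ p + ‖y‖ ^ p)) :=
  parallelogram_law_iff_unitChordBound.trans (unitChordBound_iff_alphaD_ge hp)

end PAngularDistance

theorem pAngular_lower_bound_characterizes_inner
    {X : Type*} [NormedAddCommGroup X] [NormedSpace ℝ X]
    (hdim : 3 ≤ Module.rank ℝ X) (p : ℝ) (hp : p ≠ 0) :
    (∀ x y : X, ‖x + y‖ ^ 2 + ‖x - y‖ ^ 2 = 2 * ‖x‖ ^ 2 + 2 * ‖y‖ ^ 2) ↔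
      (∀ x y : X, x ≠ 0 → y ≠ 0 →
        alphaD p x y
          ≥ (2 * ‖x‖ ^ p * ‖y‖ ^ p * angularD x y + (‖x‖ ^ p - ‖y‖ ^ p) ^ 2) /
              (‖x‖ ^ p + ‖y‖ ^ p)) :=
  pAngular_lower_bound_characterizes_inner_general hp
end
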